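/- arXiv:1708.00832 — 2 statements merged into one kernel-verified Lean document; each statement's English description precedes it below -/
import Mathlib

section
/- Let T = {2314, 2431, 3412} (patterns of length 4). Then the generating function for T-avoiders satisfies, as formal power series over ℚ, (1 - x(1-2x)·C(x)^2)·F_T(x) = 1 + x^2·(1-x)·C(x)^4, where C(x) is the Catalan number generating function; that is, F_T(x) = (1 + x^2(1-x)C(x)^4)/(1 - x(1-2x)C(x)^2). -/
open PowerSeries

/-- A permutation `π` of `{0,…,n-1}` contains the pattern `σ` (of length `k`) if there is an
order-embedding of positions on which the values of `π` appear in the same relative order as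
the values of `σ`. -/
def ContainsPattern {n k : ℕ} (π : Equiv.Perm (Fin n)) (σ : Fin k → Fin k) : Prop :=
  ∃ f : Fin k ↪o Fin n, ∀ a b : Fin k, σ a < σ b ↔ π (f a) < π (f b)

/-- The number of permutations of length `n` avoiding every pattern in `T`. -/
noncomputable def avoiderCount (T : Set (Fin 4 → Fin 4)) (n : ℕ) : ℕ :=
  Nat.card {π : Equiv.Perm (Fin n) // ∀ σ ∈ T, ¬ ContainsPattern π σ}

/-- The generating function `F_T(x) = ∑_n |S_n(T)| xⁿ` over `ℚ`. -/
noncomputable def avoiderGF (T : Set (Fin 4 → Fin 4)) : PowerSeries ℚ :=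
  PowerSeries.mk fun n => (avoiderCount T n : ℚ)

/-- The generating function of the Catalan numbers over `ℚ`. -/
noncomputable def catalanGF : PowerSeries ℚ :=
  PowerSeries.mk fun n => (catalan n : ℚ)

/-! Algebraic part -/

/-- counts of descendants -/
def tri : ℕ → (ℕ → ℕ) × (ℕ → ℕ) × (ℕ → ℕ)
  | 0 => (fun _ => 1, fun _ => 1, fun _ => 1)
  | d + 1 =>
    (fun k => ∑ j ∈ Finset.range (k + 1), (tri d).1 j + (tri d).2.1 k,
     fun k => ∑ j ∈ Finset.range k, (tri d).1 (j + 1) + (tri d).1 1 + (tri d).2.1 k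
        + (tri d).2.1 (k + 1),
     fun k => ∑ j ∈ Finset.range (k + 2), (tri d).1 j + (tri d).2.2 (k + 1)
        + (tri d).2.1 (k + 2))

def ddc : ℕ → ℕ
  | 0 => 1
  | d + 1 => ddc d + (tri d).2.2 0 + (tri d).2.1 1

noncomputable def gW (k : ℕ) : PowerSeries ℚ := PowerSeries.mk fun d => ((tri d).1 k : ℚ)
noncomputable def gV (k : ℕ) : PowerSeries ℚ := PowerSeries.mk fun d => ((tri d).2.1 k : ℚ)
noncomputable def gU (k : ℕ) : PowerSeries ℚ := PowerSeries.mk fun d => ((tri d).2.2 k : ℚ)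
noncomputable def gD : PowerSeries ℚ := PowerSeries.mk fun d => (ddc d : ℚ)

lemma gW_eq (k : ℕ) : gW k = 1 + X * (∑ j ∈ Finset.range (k + 1), gW j + gV k) := by
  ext n
  cases n with
  | zero => simp [gW, tri]
  | succ n => simp [gW, gV, tri, coeff_succ_X_mul, PowerSeries.coeff_one, map_sum]

lemma gV_eq (k : ℕ) : gV k = 1 + X * (∑ j ∈ Finset.range k, gW (j + 1) + gW 1 + gV k
    + gV (k + 1)) := by
  ext n
  cases n with
  | zero => simp [gV, tri]
  | succ n => simp [gW, gV, tri, coeff_succ_X_mul, PowerSeries.coeff_one, map_sum]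

lemma gU_eq (k : ℕ) : gU k = 1 + X * (∑ j ∈ Finset.range (k + 2), gW j + gU (k + 1)
    + gV (k + 2)) := by
  ext n
  cases n with
  | zero => simp [gU, tri]
  | succ n => simp [gW, gV, gU, tri, coeff_succ_X_mul, PowerSeries.coeff_one, map_sum]

lemma gD_eq : gD = 1 + X * (gD + gU 0 + gV 1) := by
  ext n
  cases n with
  | zero => simp [gD, ddc]
  | succ n => simp [gD, gV, gU, ddc, coeff_succ_X_mul, PowerSeries.coeff_one]

lemma cat_eq : catalanGF = 1 + X * catalanGF ^ 2 := by
  ext n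
  cases n with
  | zero => simp [catalanGF]
  | succ n =>
    rw [map_add, coeff_succ_X_mul, pow_two, PowerSeries.coeff_mul]
    simp [catalanGF, PowerSeries.coeff_one, catalan_succ']

lemma ser_zero (f : PowerSeries ℚ) (h : ∀ n : ℕ, (X : PowerSeries ℚ) ^ n ∣ f) : f = 0 := by
  ext n
  have := (PowerSeries.X_pow_dvd_iff.1 (h (n + 1))) n (Nat.lt_succ_self n)
  simpa using this

lemma solve_sys (Δ : PowerSeries ℚ)
    (hΔ : Δ = 1 - 2 * X + 2 * X ^ 2 - X * catalanGF) :
    (∀ k, Δ * gW k = (1 - X) * catalanGF ^ k) ∧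
    (∀ k, Δ * gV k = (1 - X) * catalanGF ^ (k + 1) + X * catalanGF - X) ∧
    (∀ k, Δ * gU k = (1 - X) * catalanGF * (catalanGF ^ 2 - catalanGF + 1) * catalanGF ^ k) := by
  have hC := cat_eq
  set C := catalanGF with hCdef
  have i1 : ∀ k : ℕ, (1 - X) * C ^ k = Δ + X * (∑ j ∈ Finset.range (k + 1), (1 - X) * C ^ j
      + ((1 - X) * C ^ (k + 1) + X * C - X)) := by
    intro k
    induction k with
    | zero => simp; rw [hΔ]; ring
    | succ k ih =>
      rw [Finset.sum_range_succ]
      linear_combination ih + (1 - X) * C ^ k * hC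
  have i2 : ∀ k : ℕ, (1 - X) * C ^ (k + 1) + X * C - X
      = Δ + X * (∑ j ∈ Finset.range k, (1 - X) * C ^ (j + 1) + (1 - X) * C ^ 1
      + ((1 - X) * C ^ (k + 1) + X * C - X) + ((1 - X) * C ^ (k + 2) + X * C - X)) := by
    intro k
    induction k with
    | zero => simp; rw [hΔ]; linear_combination (1 - X) * hC
    | succ k ih =>
      rw [Finset.sum_range_succ]
      linear_combination ih + ((1 - X) * C ^ (k + 1)) * hC
  have i3 : ∀ k : ℕ, (1 - X) * C * (C ^ 2 - C + 1) * C ^ k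
      = Δ + X * (∑ j ∈ Finset.range (k + 2), (1 - X) * C ^ j
      + (1 - X) * C * (C ^ 2 - C + 1) * C ^ (k + 1) + ((1 - X) * C ^ (k + 3) + X * C - X)) := by
    intro k
    have h := i1 (k + 1)
    linear_combination h + (1 - X) * C ^ 2 * C ^ k * hC
  have key : ∀ n : ℕ, ∀ k, (X : PowerSeries ℚ) ^ n ∣ (Δ * gW k - (1 - X) * C ^ k) ∧
     (X : PowerSeries ℚ) ^ n ∣ (Δ * gV k - ((1 - X) * C ^ (k + 1) + X * C - X)) ∧
     (X : PowerSeries ℚ) ^ n ∣ (Δ * gU k - (1 - X) * C * (C ^ 2 - C + 1) * C ^ k) := by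
    intro n
    induction n with
    | zero => intro k; simp
    | succ n ih =>
      intro k
      have hs1 : ∀ m, (X : PowerSeries ℚ) ^ n ∣ 
          ∑ j ∈ Finset.range m, (Δ * gW j - (1 - X) * C ^ j) := fun m =>
        Finset.dvd_sum fun j _ => (ih j).1
      have hs2 : ∀ m, (X : PowerSeries ℚ) ^ n ∣ 
          ∑ j ∈ Finset.range m, (Δ * gW (j + 1) - (1 - X) * C ^ (j + 1)) := fun m =>
        Finset.dvd_sum fun j _ => (ih (j + 1)).1
      refine ⟨?_, ?_, ?_⟩
      · rw [pow_succ', i1 k]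
        have : Δ * gW k - (Δ + X * (∑ j ∈ Finset.range (k + 1), (1 - X) * C ^ j
            + ((1 - X) * C ^ (k + 1) + X * C - X))) =
            X * (∑ j ∈ Finset.range (k + 1), (Δ * gW j - (1 - X) * C ^ j)
             + (Δ * gV k - ((1 - X) * C ^ (k + 1) + X * C - X))) := by
          simp only [Finset.sum_sub_distrib, ← Finset.mul_sum]
          linear_combination Δ * gW_eq k
        rw [this]
        exact mul_dvd_mul_left _ (dvd_add (hs1 _) (ih k).2.1)
      · rw [pow_succ', i2 k]
        have : Δ * gV k - (Δ + X * (∑ j ∈ Finset.range k, (1 - X) * C ^ (j + 1) + (1 - X) * C ^ 1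
            + ((1 - X) * C ^ (k + 1) + X * C - X) + ((1 - X) * C ^ (k + 2) + X * C - X))) =
            X * (∑ j ∈ Finset.range k, (Δ * gW (j + 1) - (1 - X) * C ^ (j + 1))
             + (Δ * gW 1 - (1 - X) * C ^ 1)
             + (Δ * gV k - ((1 - X) * C ^ (k + 1) + X * C - X))
             + (Δ * gV (k + 1) - ((1 - X) * C ^ (k + 1 + 1) + X * C - X))) := by
          simp only [Finset.sum_sub_distrib, ← Finset.mul_sum]
          linear_combination Δ * gV_eq k
        rw [this]
        exact mul_dvd_mul_left _ (dvd_add (dvd_add (dvd_add (hs2 _) (ih 1).1) (ih k).2.1)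
          (ih (k + 1)).2.1)
      · rw [pow_succ', i3 k]
        have : Δ * gU k - (Δ + X * (∑ j ∈ Finset.range (k + 2), (1 - X) * C ^ j
            + (1 - X) * C * (C ^ 2 - C + 1) * C ^ (k + 1)
            + ((1 - X) * C ^ (k + 3) + X * C - X))) =
            X * (∑ j ∈ Finset.range (k + 2), (Δ * gW j - (1 - X) * C ^ j)
             + (Δ * gU (k + 1) - (1 - X) * C * (C ^ 2 - C + 1) * C ^ (k + 1))
             + (Δ * gV (k + 2) - ((1 - X) * C ^ (k + 2 + 1) + X * C - X))) := by
          simp only [Finset.sum_sub_distrib, ← Finset.mul_sum]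
          linear_combination Δ * gU_eq k
        rw [this]
        exact mul_dvd_mul_left _ (dvd_add (dvd_add (hs1 _) (ih (k + 1)).2.2) (ih (k + 2)).2.1)
  refine ⟨fun k => ?_, fun k => ?_, fun k => ?_⟩
  · exact sub_eq_zero.1 (ser_zero _ fun n => (key n k).1)
  · exact sub_eq_zero.1 (ser_zero _ fun n => (key n k).2.1)
  · exact sub_eq_zero.1 (ser_zero _ fun n => (key n k).2.2)

lemma final_alg (F : PowerSeries ℚ) (hF : F = 1 + X * (1 + X * (gD + gV 0))) :
    ((1 : PowerSeries ℚ) - X * (1 - 2*X) * catalanGF^2) * F = 1 + X^2 * (1 - X) * catalanGF^4 := by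
  obtain ⟨hW, hV, hU⟩ := solve_sys _ rfl
  have hC := cat_eq
  have hD := gD_eq
  have v0 := hV 0
  have v1 := hV 1
  have u0 := hU 0
  set C := catalanGF with hCdef
  set Δ : PowerSeries ℚ := 1 - 2 * X + 2 * X ^ 2 - X * C with hΔ
  have hne : Δ * (1 - X) ≠ 0 := by
    intro h
    have := congrArg (PowerSeries.constantCoeff) h
    simp [hΔ] at this
  apply mul_left_cancel₀ hne
  have hDD : Δ * (1 - X) * gD = Δ + X * ((1 - X) * C * (C ^ 2 - C + 1) * C ^ 0
     + ((1 - X) * C ^ (1 + 1) + X * C - X)) := by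
    linear_combination Δ * hD + X * u0 + X * v1
  have hFF : Δ * (1 - X) * F = Δ * (1 - X) * (1 + X) + X ^ 2 *
     (Δ + X * ((1 - X) * C * (C ^ 2 - C + 1) * C ^ 0
     + ((1 - X) * C ^ (1 + 1) + X * C - X)) + (1 - X) * ((1 - X) * C ^ (0 + 1) + X * C - X)) := by
    linear_combination Δ * (1 - X) * hF + X ^ 2 * hDD + X ^ 2 * (1 - X) * v0
  have : Δ * (1 - X) * ((1 - X * (1 - 2*X) * C^2) * F) = (1 - X * (1 - 2*X) * C^2) *
     (Δ * (1 - X) * F) := by ring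
  rw [this, hFF, hΔ]
  linear_combination ((-1) * X ^ 1 * C ^ 0 + (-1) * X ^ 1 * C ^ 1 + (2) * X ^ 2 * C ^ 0 + (2) * X ^ 2 * C ^ 1 + (-1) * X ^ 2 * C ^ 2 + (-1) * X ^ 2 * C ^ 3 + (-1) * X ^ 3 * C ^ 0 + (-1) * X ^ 3 * C ^ 1 + (3) * X ^ 3 * C ^ 2 + (3) * X ^ 3 * C ^ 3 + (-4) * X ^ 4 * C ^ 2 + (-4) * X ^ 4 * C ^ 3 + (2) * X ^ 5 * C ^ 2 + (2) * X ^ 5 * C ^ 3) * hC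
/-! Combinatorial part -/

def sh (a v : ℕ) : ℕ := if v < a then v else v + 1

def push (a : ℕ) (p : List ℕ) : List ℕ := a :: p.map (sh a)

lemma sub1 (a : ℕ) (p : List ℕ) (d : ℕ) :
    d ∈ p.map (sh a) ↔ ∃ d', d' ∈ p ∧ d = sh a d' := by
  simp [eq_comm]

lemma sub2 (a : ℕ) (p : List ℕ) (c d : ℕ) :
    [c, d].Sublist (p.map (sh a)) ↔ ∃ c' d', [c', d'].Sublist p ∧ c = sh a c' ∧ d = sh a d' := by
  rw [List.sublist_map_iff]
  constructor
  · rintro ⟨l, hl, h⟩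
    match l, h with
    | [c', d'], h => simp at h; exact ⟨c', d', hl, h.1, h.2⟩
  · rintro ⟨c', d', h, rfl, rfl⟩
    exact ⟨_, h, by simp⟩

lemma sub3 (a : ℕ) (p : List ℕ) (b c d : ℕ) :
    [b, c, d].Sublist (p.map (sh a)) ↔
      ∃ b' c' d', [b', c', d'].Sublist p ∧ b = sh a b' ∧ c = sh a c' ∧ d = sh a d' := by
  rw [List.sublist_map_iff]
  constructor
  · rintro ⟨l, hl, h⟩
    match l, h with
    | [b', c', d'], h => simp at h; exact ⟨b', c', d', hl, h.1, h.2.1, h.2.2⟩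
  · rintro ⟨b', c', d', h, rfl, rfl, rfl⟩
    exact ⟨_, h, by simp⟩

lemma sub4 (a : ℕ) (p : List ℕ) (e b c d : ℕ) :
    [e, b, c, d].Sublist (p.map (sh a)) ↔
      ∃ e' b' c' d', [e', b', c', d'].Sublist p ∧ e = sh a e' ∧ b = sh a b' ∧ c = sh a c'
        ∧ d = sh a d' := by
  rw [List.sublist_map_iff]
  constructor
  · rintro ⟨l, hl, h⟩
    match l, h with
    | [e', b', c', d'], h => simp at h; exact ⟨e', b', c', d', hl, h.1, h.2.1, h.2.2.1, h.2.2.2⟩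
  · rintro ⟨e', b', c', d', h, rfl, rfl, rfl, rfl⟩
    exact ⟨_, h, by simp⟩

def Good (p : List ℕ) : Prop := ∀ a b c d, [a, b, c, d].Sublist p →
  ¬ ((c < a ∧ a < b ∧ b < d) ∨ (d < a ∧ a < c ∧ c < b) ∨ (c < d ∧ d < a ∧ a < b))

def Forb (p : List ℕ) (a : ℕ) : Prop := ∃ b c d, [b, c, d].Sublist p ∧
  ((c < a ∧ a ≤ b ∧ b < d) ∨ (d < a ∧ a ≤ c ∧ c < b) ∨ (c < d ∧ d < a ∧ a ≤ b))

def Nw (p : List ℕ) (a s : ℕ) : Prop := ∃ c d, [c, d].Sublist p ∧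
  ((c < s ∧ a ≤ d) ∨ (d < s ∧ s ≤ c ∧ c < a) ∨ (c < d ∧ d < s))

lemma sh_lt_sh {a u v : ℕ} : sh a u < sh a v ↔ u < v := by
  unfold sh; split_ifs <;> omega
lemma sh_lt {a u s : ℕ} (h : s ≤ a) : sh a u < s ↔ u < s := by
  unfold sh; split_ifs <;> omega
lemma le_sh {a u s : ℕ} (h : s ≤ a) : s ≤ sh a u ↔ s ≤ u := by
  unfold sh; split_ifs <;> omega
lemma sh_lt' {a u s : ℕ} (h : a ≤ s) : sh a u < s + 1 ↔ u < s := by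
  unfold sh; split_ifs <;> omega
lemma le_sh' {a u s : ℕ} (h : a ≤ s) : s + 1 ≤ sh a u ↔ s ≤ u := by
  unfold sh; split_ifs <;> omega
lemma lt_sh {a u : ℕ} : a < sh a u ↔ a ≤ u := by
  unfold sh; split_ifs <;> omega

lemma good_push (a : ℕ) (p : List ℕ) : Good (push a p) ↔ Good p ∧ ¬ Forb p a := by
  unfold Good Forb push
  simp only [List.cons_sublist_cons', sub4, sub3]
  constructor
  · intro h
    refine ⟨fun e b c d hs hp => ?_, ?_⟩
    · refine h _ _ _ _ (Or.inl ⟨e, b, c, d, hs, rfl, rfl, rfl, rfl⟩) ?_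
      simpa only [sh_lt_sh] using hp
    · rintro ⟨b, c, d, hs, hp⟩
      refine h _ _ _ _ (Or.inr ⟨rfl, b, c, d, hs, rfl, rfl, rfl⟩) ?_
      simpa only [sh_lt_sh, sh_lt le_rfl, lt_sh] using hp
  · rintro ⟨h1, h2⟩ e b c d (⟨e, b, c, d, hs, rfl, rfl, rfl, rfl⟩ | ⟨rfl, b, c, d, hs, rfl, rfl, rfl⟩) hp
    · simp only [sh_lt_sh] at hp
      exact h1 _ _ _ _ hs hp
    · simp only [sh_lt_sh, sh_lt le_rfl, lt_sh] at hp
      exact h2 ⟨_, _, _, hs, hp⟩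

lemma forb_push_hi {x s : ℕ} (p : List ℕ) (h : x ≤ s) : Forb (push x p) (s + 1) ↔ Forb p s := by
  unfold Forb push
  simp only [List.cons_sublist_cons', sub3, sub2]
  constructor
  · rintro ⟨b, c, d, (⟨b, c, d, hs, rfl, rfl, rfl⟩ | ⟨rfl, c, d, hs, rfl, rfl⟩), hp⟩
    · simp only [sh_lt_sh, sh_lt' h, le_sh' h] at hp
      exact ⟨_, _, _, hs, hp⟩
    · omega
  · rintro ⟨b, c, d, hs, hp⟩
    refine ⟨_, _, _, Or.inl ⟨b, c, d, hs, rfl, rfl, rfl⟩, ?_⟩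
    simpa only [sh_lt_sh, sh_lt' h, le_sh' h] using hp

lemma forb_push_lo {x s : ℕ} (p : List ℕ) (h : s ≤ x) :
    Forb (push x p) s ↔ Forb p s ∨ Nw p x s := by
  unfold Forb Nw push
  simp only [List.cons_sublist_cons', sub3, sub2]
  constructor
  · rintro ⟨b, c, d, (⟨b, c, d, hs, rfl, rfl, rfl⟩ | ⟨rfl, c, d, hs, rfl, rfl⟩), hp⟩
    · simp only [sh_lt_sh, sh_lt h, le_sh h] at hp
      exact Or.inl ⟨_, _, _, hs, hp⟩
    · simp only [sh_lt_sh, sh_lt h, le_sh h, lt_sh, sh_lt le_rfl] at hp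
      refine Or.inr ⟨_, _, hs, ?_⟩
      omega
  · rintro (⟨b, c, d, hs, hp⟩ | ⟨c, d, hs, hp⟩)
    · refine ⟨_, _, _, Or.inl ⟨b, c, d, hs, rfl, rfl, rfl⟩, ?_⟩
      simpa only [sh_lt_sh, sh_lt h, le_sh h] using hp
    · refine ⟨_, _, _, Or.inr ⟨rfl, c, d, hs, rfl, rfl⟩, ?_⟩
      simp only [sh_lt_sh, sh_lt h, le_sh h, lt_sh, sh_lt le_rfl]
      omega

/-- `p` is a permutation of `0..n-1` as far as membership is concerned -/
def IsP (p : List ℕ) (n : ℕ) : Prop := ∀ v, v ∈ p ↔ v < n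

lemma isP_push {x n : ℕ} {p : List ℕ} (hx : x ≤ n) (h : IsP p n) : IsP (push x p) (n + 1) := by
  intro v
  simp only [push, List.mem_cons, sub1]
  constructor
  · rintro (rfl | ⟨d, hd, rfl⟩)
    · omega
    · have := (h d).1 hd
      unfold sh; split_ifs <;> omega
  · intro hv
    rcases lt_trichotomy v x with h1 | h1 | h1
    · exact Or.inr ⟨v, (h v).2 (by omega), by simp [sh, h1]⟩
    · exact Or.inl h1
    · refine Or.inr ⟨v - 1, (h _).2 (by omega), ?_⟩
      unfold sh; split_ifs <;> omega

/-- special triples -/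
def Sp (p : List ℕ) (n a s : ℕ) : Prop :=
  1 ≤ s ∧ s ≤ a ∧ a ≤ n ∧ ¬ Forb p a ∧ ¬ Forb p s ∧ ¬ Nw p a s

lemma mem_of_sub2 {p : List ℕ} {c d : ℕ} (h : [c, d].Sublist p) : c ∈ p ∧ d ∈ p :=
  ⟨h.subset (by simp), h.subset (by simp)⟩

lemma mem_of_sub3 {p : List ℕ} {b c d : ℕ} (h : [b, c, d].Sublist p) : b ∈ p ∧ c ∈ p ∧ d ∈ p :=
  ⟨h.subset (by simp), h.subset (by simp), h.subset (by simp)⟩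

lemma not_forb_top {p : List ℕ} {n : ℕ} (h : IsP p n) : ¬ Forb p n := by
  rintro ⟨b, c, d, hs, hp⟩
  obtain ⟨h1, h2, h3⟩ := mem_of_sub3 hs
  rw [h] at h1 h2 h3
  omega

lemma not_forb_zero {p : List ℕ} : ¬ Forb p 0 := by
  rintro ⟨b, c, d, hs, hp⟩
  omega

lemma not_nw_zero {p : List ℕ} {a : ℕ} : ¬ Nw p a 0 := by
  rintro ⟨c, d, hs, hp⟩
  omega

lemma nw_push_lo {x a s : ℕ} (p : List ℕ) (hs : s ≤ a) (ha : a ≤ x) :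
    Nw (push x p) a s ↔ Nw p a s := by
  unfold Nw push
  simp only [List.cons_sublist_cons', sub2, List.singleton_sublist, sub1]
  have hsx := hs.trans ha
  constructor
  · rintro ⟨c, d, (⟨c, d, h, rfl, rfl⟩ | ⟨rfl, d, h, rfl⟩), hp⟩
    · simp only [sh_lt_sh, sh_lt hsx, le_sh hsx, sh_lt ha, le_sh ha] at hp
      exact ⟨_, _, h, hp⟩
    · omega
  · rintro ⟨c, d, h, hp⟩
    refine ⟨_, _, Or.inl ⟨c, d, h, rfl, rfl⟩, ?_⟩
    simpa only [sh_lt_sh, sh_lt hsx, le_sh hsx, sh_lt ha, le_sh ha] using hp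

lemma nw_push_top {x n : ℕ} (p : List ℕ) (hx : x ≤ n) (h : IsP p n) :
    Nw (push x p) (n + 1) (x + 1) ↔ Nw p n x := by
  unfold Nw push
  simp only [List.cons_sublist_cons', sub2, List.singleton_sublist, sub1]
  constructor
  · rintro ⟨c, d, (⟨c, d, hh, rfl, rfl⟩ | ⟨rfl, d, hh, rfl⟩), hp⟩
    · simp only [sh_lt_sh, sh_lt' le_rfl, le_sh' le_rfl, sh_lt' hx, le_sh' hx] at hp
      exact ⟨_, _, hh, hp⟩
    · rw [h] at hh
      simp only [le_sh' hx, lt_sh, sh_lt' le_rfl] at hp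
      omega
  · rintro ⟨c, d, hh, hp⟩
    refine ⟨_, _, Or.inl ⟨c, d, hh, rfl, rfl⟩, ?_⟩
    simpa only [sh_lt_sh, sh_lt' le_rfl, le_sh' le_rfl, sh_lt' hx, le_sh' hx] using hp

lemma nw_cons {x a s d : ℕ} {p : List ℕ} (hd : d ∈ p)
    (h : (x < s ∧ a ≤ d) ∨ (d < s ∧ s ≤ x ∧ x < a) ∨ (x < d ∧ d < s)) : Nw (x :: p) a s :=
  ⟨x, d, by simpa using hd, h⟩

lemma sp_push {x n a s : ℕ} {p : List ℕ} (hn : 1 ≤ n) (h : IsP p n) (hx : x ≤ n)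
    (hxF : ¬ Forb p x) :
    Sp (push x p) (n + 1) a s ↔ (a ≤ x ∧ Sp p n a s ∧ ¬ Nw p x a ∧ ¬ Nw p x s) ∨
      (a = n + 1 ∧ s = x + 1 ∧ (x = 0 ∨ Sp p n n x)) := by
  rcases le_or_gt a x with hax | hax
  · constructor
    · rintro ⟨h1, h2, h3, h4, h5, h6⟩
      rw [nw_push_lo p h2 hax] at h6
      rw [forb_push_lo p hax] at h4
      rw [forb_push_lo p (h2.trans hax)] at h5
      push Not at h4 h5
      exact Or.inl ⟨hax, ⟨h1, h2, by omega, h4.1, h5.1, h6⟩, h4.2, h5.2⟩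
    · rintro (⟨-, ⟨h1, h2, h3, h4, h5, h6⟩, h7, h8⟩ | ⟨h1, -⟩)
      · refine ⟨h1, h2, by omega, ?_, ?_, ?_⟩
        · rw [forb_push_lo p hax]; tauto
        · rw [forb_push_lo p (h2.trans hax)]; tauto
        · rwa [nw_push_lo p h2 hax]
      · omega
  · constructor
    · rintro ⟨h1, h2, h3, h4, h5, h6⟩
      right
      have hP := isP_push hx h
      have hmem : ∀ v, v < n + 1 → v ≠ x → v ∈ p.map (sh x) := by
        intro v hv hvx
        have := (hP v).2 hv
        simp only [push, List.mem_cons] at this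
        tauto
      have hxs : x < s := by
        by_contra hc
        have h0 : 0 ∈ p.map (sh x) := hmem 0 (by omega) (by omega)
        exact h6 (nw_cons h0 (by omega))
      have ha : a = n + 1 := by
        by_contra hc
        have h0 := hmem n (by omega) (by omega)
        exact h6 (nw_cons h0 (by omega))
      have hs : s = x + 1 := by
        by_contra hc
        have h0 := hmem (x + 1) (by omega) (by omega)
        exact h6 (nw_cons h0 (by omega))
      subst ha hs
      refine ⟨rfl, rfl, ?_⟩
      rw [nw_push_top p hx h] at h6
      rcases Nat.eq_zero_or_pos x with h0 | h0
      · exact Or.inl h0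
      · exact Or.inr ⟨h0, hx, le_rfl, not_forb_top h, hxF, h6⟩
    · rintro (⟨h1, -⟩ | ⟨rfl, rfl, h1⟩)
      · omega
      · refine ⟨by omega, by omega, le_rfl, not_forb_top (isP_push hx h), ?_, ?_⟩
        · rwa [forb_push_hi p le_rfl]
        · rw [nw_push_top p hx h]
          rcases h1 with rfl | h1
          · exact not_nw_zero
          · exact h1.2.2.2.2.2

open Classical in
noncomputable def Act (p : List ℕ) : Finset ℕ :=
  (Finset.range (p.length + 1)).filter fun a => ¬ Forb p a

lemma mem_act {p : List ℕ} {a : ℕ} : a ∈ Act p ↔ a ≤ p.length ∧ ¬ Forb p a := by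
  simp [Act]

@[simp] lemma push_length {x : ℕ} {p : List ℕ} : (push x p).length = p.length + 1 := by
  simp [push]

lemma zero_mem_act {p : List ℕ} : 0 ∈ Act p := mem_act.2 ⟨by omega, not_forb_zero⟩

lemma act_push {x s : ℕ} {p : List ℕ} (hx : x ∈ Act p) :
    s ∈ Act (push x p) ↔ s = 0 ∨ (∃ t, t ∈ Act p ∧ x ≤ t ∧ s = t + 1) ∨ Sp p p.length x s := by
  rw [mem_act] at hx
  rw [mem_act, push_length]
  rcases Nat.eq_zero_or_pos s with rfl | h0
  · simp [not_forb_zero]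
  rcases le_or_gt s x with hsx | hsx
  · rw [forb_push_lo p hsx]
    constructor
    · rintro ⟨h1, h2⟩
      push Not at h2
      exact Or.inr (Or.inr ⟨h0, hsx, hx.1, hx.2, h2.1, h2.2⟩)
    · rintro (h | ⟨t, h1, h2, h3⟩ | ⟨h1, h2, h3, h4, h5, h6⟩)
      · omega
      · omega
      · exact ⟨by omega, by tauto⟩
  · obtain ⟨t, rfl⟩ : ∃ t, s = t + 1 := ⟨s - 1, by omega⟩
    rw [forb_push_hi p (by omega)]
    constructor
    · rintro ⟨h1, h2⟩
      exact Or.inr (Or.inl ⟨t, mem_act.2 ⟨by omega, h2⟩, by omega, rfl⟩)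
    · rintro (h | ⟨t', h1, h2, h3⟩ | ⟨h1, h2, h3⟩)
      · omega
      · obtain rfl : t = t' := by omega
        rw [mem_act] at h1
        exact ⟨by omega, h1.2⟩
      · omega
lemma pair_sub {p : List ℕ} {a b : ℕ} (ha : a ∈ p) (hb : b ∈ p) (hab : a ≠ b) :
    [a, b].Sublist p ∨ [b, a].Sublist p := by
  induction p with
  | nil => simp at ha
  | cons x p ih =>
    simp only [List.mem_cons] at ha hb
    rcases ha with rfl | ha
    · rcases hb with rfl | hb
      · exact absurd rfl hab
      · left; simpa using hb
    · rcases hb with rfl | hb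
      · right; simpa using ha
      · rcases ih ha hb with h | h
        · exact Or.inl (h.cons _)
        · exact Or.inr (h.cons _)

inductive Ty
  | N : Ty
  | A : ℕ → Ty
  | B : ℕ → Ty
  | D : Ty

def SpT : Ty → ℕ → ℕ → ℕ → Prop
  | Ty.N, _, _, _ => False
  | Ty.A i, n, a, s => a = n ∧ s = i
  | Ty.B m, _, a, s => a = m ∧ s = m
  | Ty.D, n, a, s => (a = n ∧ s = n) ∨ (2 ≤ n ∧ a = n - 1 ∧ s = n - 1)

def Aux : Ty → List ℕ → ℕ → Prop
  | Ty.N, _, _ => True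
  | Ty.A i, p, n => 1 ≤ i ∧ i < n ∧ (∃ c d, [c, d].Sublist p ∧ c < d) ∧ i ∈ Act p ∧
      ∀ s ∈ Act p, s < i → s = 0
  | Ty.B m, p, n => 1 ≤ m ∧ m < n ∧ (∃ d, [m, d].Sublist p ∧ d < m) ∧ m ∈ Act p ∧
      ∀ s ∈ Act p, s < m → s = 0
  | Ty.D, p, n => (∀ c d, [c, d].Sublist p → d < c) ∧
      ∀ s, s ∈ Act p ↔ s = 0 ∨ s = n - 1 ∨ s = n

structure PInv (p : List ℕ) (n : ℕ) (t : Ty) : Prop where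
  len : p.length = n
  pos : 1 ≤ n
  isP : IsP p n
  sp : ∀ a s, Sp p n a s ↔ SpT t n a s
  aux : Aux t p n

lemma PInv.step {p : List ℕ} {n x : ℕ} {t t' : Ty} (h : PInv p n t) (hx : x ∈ Act p)
    (hsp : ∀ a s, ((a ≤ x ∧ SpT t n a s ∧ ¬ Nw p x a ∧ ¬ Nw p x s) ∨
      (a = n + 1 ∧ s = x + 1 ∧ (x = 0 ∨ SpT t n n x))) ↔ SpT t' (n + 1) a s)
    (haux : Aux t' (push x p) (n + 1)) : PInv (push x p) (n + 1) t' := by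
  have hx' := mem_act.1 hx
  rw [h.len] at hx'
  refine ⟨by simp [h.len], by omega, isP_push hx'.1 h.isP, fun a s => ?_, haux⟩
  rw [sp_push h.pos h.isP hx'.1 hx'.2, h.sp, h.sp]
  exact hsp a s

lemma PInv.act_push {p : List ℕ} {n x : ℕ} {t : Ty} (h : PInv p n t) (hx : x ∈ Act p) (s : ℕ) :
    s ∈ Act (push x p) ↔ s = 0 ∨ (∃ t, t ∈ Act p ∧ x ≤ t ∧ s = t + 1) ∨ SpT t n x s := by
  rw [_root_.act_push hx, h.len, h.sp]

lemma PInv.sp_pos {p : List ℕ} {n a s : ℕ} {t : Ty} (h : PInv p n t) (hs : SpT t n a s) :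
    Sp p n a s := (h.sp a s).2 hs

lemma push_sub2_head {x d : ℕ} {p : List ℕ} (hd : d ∈ p) : [x, sh x d].Sublist (push x p) := by
  simp only [push, List.cons_sublist_cons, List.singleton_sublist, List.mem_map]
  exact ⟨d, hd, rfl⟩

lemma push_sub2_tail {x c d : ℕ} {p : List ℕ} (h : [c, d].Sublist p) :
    [sh x c, sh x d].Sublist (push x p) := by
  simp only [push, List.cons_sublist_cons', sub2]
  exact Or.inl ⟨c, d, h, rfl, rfl⟩

lemma PInv.zero {p : List ℕ} {n : ℕ} {t : Ty} (h : PInv p n t) :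
    PInv (push 0 p) (n + 1) (Ty.A 1) := by
  refine h.step zero_mem_act (fun a s => ?_) ⟨le_rfl, by have := h.pos; omega, ?_, ?_, ?_⟩
  · simp only [SpT]
    constructor
    · rintro (⟨h1, h2, -⟩ | h1)
      · have := h.sp_pos h2
        have h3 := this.1
        have h4 := this.2.1
        omega
      · omega
    · rintro ⟨rfl, rfl⟩; simp
  · exact ⟨_, _, push_sub2_head ((h.isP 0).2 h.pos), by simp [sh]⟩
  · rw [h.act_push zero_mem_act]
    exact Or.inr (Or.inl ⟨0, zero_mem_act, le_rfl, rfl⟩)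
  · intros; omega

lemma PInv.AA {p : List ℕ} {n i : ℕ} (h : PInv p n (Ty.A i)) :
    PInv (push i p) (n + 1) (Ty.A (i + 1)) := by
  obtain ⟨h1, h2, ⟨c, d, h3, h3'⟩, h4, h5⟩ := h.aux
  refine h.step h4 (fun a s => ?_) ⟨by omega, by omega, ?_, ?_, ?_⟩
  · simp only [SpT]
    constructor
    · rintro (⟨h1, ⟨h2, -⟩, -⟩ | h1)
      · omega
      · omega
    · rintro ⟨rfl, rfl⟩; simp
  · exact ⟨_, _, push_sub2_tail h3, by rwa [sh_lt_sh]⟩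
  · rw [h.act_push h4]
    exact Or.inr (Or.inl ⟨i, h4, le_rfl, rfl⟩)
  · intro s hs hsi
    rw [h.act_push h4] at hs
    rcases hs with hs | ⟨t, _, ht, rfl⟩ | hs
    · exact hs
    · omega
    · simp only [SpT] at hs; omega

lemma PInv.AN {p : List ℕ} {n i x : ℕ} (h : PInv p n (Ty.A i)) (hx : x ∈ Act p) (h0 : x ≠ 0)
    (hi : x ≠ i) : PInv (push x p) (n + 1) Ty.N := by
  obtain ⟨h1, h2, ⟨c, d, h3, h3'⟩, h4, h5⟩ := h.aux
  refine h.step hx (fun a s => ?_) trivial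
  simp only [SpT, iff_false]
  rintro (⟨h6, ⟨rfl, rfl⟩, h8, -⟩ | h6)
  · apply h8
    have := (h.isP d).1 (mem_of_sub2 h3).2
    exact ⟨c, d, h3, by omega⟩
  · omega

lemma PInv.BB {p : List ℕ} {n m : ℕ} (h : PInv p n (Ty.B m)) :
    PInv (push m p) (n + 1) (Ty.B m) := by
  obtain ⟨h1, h2, ⟨d, h3, h3'⟩, h4, h5⟩ := h.aux
  have hsp := h.sp_pos (a := m) (s := m) ⟨rfl, rfl⟩
  refine h.step h4 (fun a s => ?_) ⟨by omega, by omega, ?_, ?_, ?_⟩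
  · simp only [SpT]
    constructor
    · rintro (⟨h1, ⟨h2, h3⟩, -⟩ | h1)
      · exact ⟨h2, h3⟩
      · omega
    · rintro ⟨rfl, rfl⟩
      exact Or.inl ⟨le_rfl, ⟨rfl, rfl⟩, hsp.2.2.2.2.2, hsp.2.2.2.2.2⟩
  · exact ⟨_, push_sub2_head (mem_of_sub2 h3).2, by rwa [sh_lt le_rfl]⟩
  · rw [h.act_push h4]
    exact Or.inr (Or.inr ⟨rfl, rfl⟩)
  · intro s hs hsi
    rw [h.act_push h4] at hs
    rcases hs with hs | ⟨t, _, ht, rfl⟩ | hs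
    · exact hs
    · omega
    · simp only [SpT] at hs; omega

lemma PInv.BN {p : List ℕ} {n m x : ℕ} (h : PInv p n (Ty.B m)) (hx : x ∈ Act p) (h0 : x ≠ 0)
    (hi : x ≠ m) : PInv (push x p) (n + 1) Ty.N := by
  obtain ⟨h1, h2, ⟨d, h3, h3'⟩, h4, h5⟩ := h.aux
  refine h.step hx (fun a s => ?_) trivial
  simp only [SpT, iff_false]
  rintro (⟨h6, ⟨rfl, rfl⟩, h8, -⟩ | h6)
  · exact h8 ⟨_, d, h3, by omega⟩
  · omega

lemma PInv.NN {p : List ℕ} {n x : ℕ} (h : PInv p n Ty.N) (hx : x ∈ Act p) (h0 : x ≠ 0) :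
    PInv (push x p) (n + 1) Ty.N := by
  refine h.step hx (fun a s => ?_) trivial
  simp only [SpT, iff_false]
  rintro (⟨h6, h7, -⟩ | h6)
  · exact h7
  · tauto

lemma PInv.DD {p : List ℕ} {n : ℕ} (h : PInv p n Ty.D) : PInv (push n p) (n + 1) Ty.D := by
  obtain ⟨h1, h2⟩ := h.aux
  have hn := h.pos
  have hx : n ∈ Act p := by rw [h2]; omega
  have hsp := h.sp_pos (a := n) (s := n) (Or.inl ⟨rfl, rfl⟩)
  refine h.step hx (fun a s => ?_) ⟨?_, ?_⟩
  · simp only [SpT]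
    constructor
    · rintro (⟨h3, h4, h5, h6⟩ | h3)
      · rcases h4 with h4 | ⟨h4, rfl, rfl⟩
        · omega
        · exfalso
          apply h5
          have hm : n - 1 ∈ p := (h.isP _).2 (by omega)
          have h0 : 0 ∈ p := (h.isP _).2 (by omega)
          have : [n - 1, 0].Sublist p := by
            rcases (pair_sub hm h0 (by omega)) with h7 | h7
            · exact h7
            · have := h1 _ _ h7; omega
          exact ⟨_, _, this, by omega⟩
      · omega
    · rintro (⟨rfl, rfl⟩ | ⟨h3, h4, h5⟩)
      · exact Or.inr ⟨rfl, rfl, Or.inr (by simp)⟩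
      · obtain rfl : a = n := by omega
        obtain rfl : s = a := by omega
        exact Or.inl ⟨le_rfl, Or.inl ⟨rfl, rfl⟩, hsp.2.2.2.2.2, hsp.2.2.2.2.2⟩
  · intro c d hcd
    simp only [push, List.cons_sublist_cons', sub2, List.singleton_sublist, sub1] at hcd
    rcases hcd with ⟨c, d, hs, rfl, rfl⟩ | ⟨rfl, d, hs, rfl⟩
    · rw [sh_lt_sh]; exact h1 _ _ hs
    · rw [sh_lt le_rfl]; exact (h.isP d).1 hs
  · intro s
    rw [h.act_push hx]
    simp only [SpT, h2]
    constructor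
    · rintro (h3 | ⟨t, h3, h4, h5⟩ | h3) <;> omega
    · rintro (h3 | h3 | h3)
      · exact Or.inl h3
      · exact Or.inr (Or.inr (by simp only [true_and]; omega))
      · right; left; exact ⟨n, by omega, by omega, h3⟩

lemma PInv.DB {p : List ℕ} {n : ℕ} (h : PInv p n Ty.D) (hn : 2 ≤ n) :
    PInv (push (n - 1) p) (n + 1) (Ty.B (n - 1)) := by
  obtain ⟨h1, h2⟩ := h.aux
  have hx : n - 1 ∈ Act p := by rw [h2]; omega
  have hsp := h.sp_pos (a := n - 1) (s := n - 1) (Or.inr ⟨hn, rfl, rfl⟩)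
  refine h.step hx (fun a s => ?_) ⟨by omega, by omega, ?_, ?_, ?_⟩
  · simp only [SpT]
    constructor
    · rintro (⟨h3, h4, h5, h6⟩ | h3) <;> omega
    · rintro ⟨rfl, rfl⟩
      exact Or.inl ⟨le_rfl, Or.inr ⟨hn, rfl, rfl⟩, hsp.2.2.2.2.2, hsp.2.2.2.2.2⟩
  · exact ⟨_, push_sub2_head ((h.isP 0).2 (by omega)), by rw [sh_lt le_rfl]; omega⟩
  · rw [h.act_push hx]
    exact Or.inr (Or.inr (Or.inr ⟨hn, rfl, rfl⟩))
  · intro s hs hsi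
    rw [h.act_push hx] at hs
    rcases hs with hs | ⟨t, _, ht, rfl⟩ | hs
    · exact hs
    · omega
    · simp only [SpT] at hs; omega

lemma PInv.base : PInv [0] 1 Ty.D := by
  have hF : ∀ a, ¬ Forb [0] a := by
    rintro a ⟨b, c, d, hs, -⟩
    have := hs.length_le
    simp at this
  have hN : ∀ a s, ¬ Nw [0] a s := by
    rintro a s ⟨c, d, hs, -⟩
    have := hs.length_le
    simp at this
  refine ⟨rfl, le_rfl, fun v => by simp, fun a s => ?_, ?_, fun s => ?_⟩
  · simp only [Sp, SpT, hF, hN, not_false_eq_true, and_true]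
    omega
  · intro c d hs
    have := hs.length_le
    simp at this
  · rw [mem_act]
    simp only [hF, not_false_eq_true, and_true, List.length_singleton]
    omega

def rk (S : Finset ℕ) (a : ℕ) : ℕ := (S.filter fun s => a < s).card

lemma PInv.card {p : List ℕ} {n x : ℕ} {t : Ty} (h : PInv p n t) (hx : x ∈ Act p)
    (hs : ∀ s, ¬ SpT t n x s) : (Act (push x p)).card = rk (Act p) x + 2 := by
  have : Act (push x p) = insert 0 (insert (x + 1)
      (((Act p).filter fun s => x < s).image (· + 1))) := by
    ext s
    rw [h.act_push hx]
    simp only [Finset.mem_insert, Finset.mem_image, Finset.mem_filter]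
    constructor
    · rintro (h1 | ⟨t, h1, h2, h3⟩ | h1)
      · tauto
      · rcases h2.lt_or_eq with h4 | h4
        · exact Or.inr (Or.inr ⟨t, ⟨h1, h4⟩, h3.symm⟩)
        · exact Or.inr (Or.inl (by omega))
      · exact absurd h1 (hs s)
    · rintro (h1 | h1 | ⟨t, ⟨h1, h2⟩, h3⟩)
      · tauto
      · exact Or.inr (Or.inl ⟨x, hx, le_rfl, h1⟩)
      · exact Or.inr (Or.inl ⟨t, h1, h2.le, h3.symm⟩)
  rw [this, Finset.card_insert_of_notMem, Finset.card_insert_of_notMem,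
    Finset.card_image_of_injective _ (add_left_injective 1)]
  · rfl
  · simp
  · simp

lemma PInv.card' {p : List ℕ} {n x s₀ : ℕ} {t : Ty} (h : PInv p n t) (hx : x ∈ Act p)
    (hs : ∀ s, SpT t n x s ↔ s = s₀) : (Act (push x p)).card = rk (Act p) x + 3 := by
  have hsp := h.sp_pos ((hs s₀).2 rfl)
  have h0 := hsp.1
  have h0' := hsp.2.1
  have : Act (push x p) = insert 0 (insert s₀ (insert (x + 1)
      (((Act p).filter fun s => x < s).image (· + 1)))) := by
    ext s
    rw [h.act_push hx]
    simp only [Finset.mem_insert, Finset.mem_image, Finset.mem_filter, hs]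
    constructor
    · rintro (h1 | ⟨t, h1, h2, h3⟩ | h1)
      · tauto
      · rcases h2.lt_or_eq with h4 | h4
        · exact Or.inr (Or.inr (Or.inr ⟨t, ⟨h1, h4⟩, h3.symm⟩))
        · exact Or.inr (Or.inr (Or.inl (by omega)))
      · tauto
    · rintro (h1 | h1 | h1 | ⟨t, ⟨h1, h2⟩, h3⟩)
      · tauto
      · tauto
      · exact Or.inr (Or.inl ⟨x, hx, le_rfl, h1⟩)
      · exact Or.inr (Or.inl ⟨t, h1, h2.le, h3.symm⟩)
  rw [this, Finset.card_insert_of_notMem, Finset.card_insert_of_notMem,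
    Finset.card_insert_of_notMem, Finset.card_image_of_injective _ (add_left_injective 1)]
  · rfl
  · simp
  · simp only [Finset.mem_insert, Finset.mem_image, Finset.mem_filter, not_or, not_exists, not_and]
    refine ⟨by omega, ?_⟩
    intro t ht; omega
  · simp only [Finset.mem_insert, Finset.mem_image, Finset.mem_filter, not_or, not_exists, not_and]
    refine ⟨by omega, by omega, ?_⟩
    intro t ht; omega

lemma sum_rk (f : ℕ → ℕ) (S : Finset ℕ) :
    ∑ a ∈ S, f (rk S a) = ∑ j ∈ Finset.range S.card, f j := by
  induction S using Finset.induction_on_min with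
  | empty => simp
  | insert a S ha ih =>
    have hna : a ∉ S := fun h => lt_irrefl _ (ha a h)
    rw [Finset.sum_insert hna, Finset.card_insert_of_notMem hna, Finset.sum_range_succ, ← ih,
      add_comm]
    congr 1
    · apply Finset.sum_congr rfl
      intro b hb
      have := ha b hb
      simp only [rk]
      rw [Finset.filter_insert, if_neg (by omega)]
    · simp only [rk]
      rw [Finset.filter_insert, if_neg (by omega), Finset.filter_true_of_mem ha]

lemma rk_insert {S : Finset ℕ} {a b : ℕ} (h : a ≤ b) : rk (insert a S) b = rk S b := by
  simp only [rk]
  rw [Finset.filter_insert, if_neg (by omega)]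

lemma rk_all {S : Finset ℕ} {a : ℕ} (h : ∀ b ∈ S, a < b) : rk S a = S.card := by
  simp only [rk]
  rw [Finset.filter_true_of_mem h]

/-- split off the least element -/
lemma split_min {S : Finset ℕ} {m : ℕ} (hm : m ∈ S) (h : ∀ s ∈ S, m ≤ s) :
    ∃ S', S = insert m S' ∧ (∀ s ∈ S', m < s) ∧ S.card = S'.card + 1 := by
  refine ⟨S.erase m, (Finset.insert_erase hm).symm, ?_, (Finset.card_erase_add_one hm).symm⟩
  intro s hs
  rw [Finset.mem_erase] at hs
  have := h s hs.2
  omega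

noncomputable def cnt : ℕ → List ℕ → ℕ
  | 0, _ => 1
  | d + 1, p => ∑ a ∈ Act p, cnt d (push a p)

lemma split_two {S : Finset ℕ} {m : ℕ} (h0 : 0 ∈ S) (hm : m ∈ S) (hm1 : 1 ≤ m)
    (h : ∀ s ∈ S, s < m → s = 0) (F : ℕ → ℕ) :
    ∃ S', (∀ s, s ∈ S' ↔ s ∈ S ∧ m < s) ∧ S.card = S'.card + 2 ∧ rk S 0 = S'.card + 1 ∧
      rk S m = S'.card ∧ (∀ s ∈ S', rk S s = rk S' s) ∧
      ∑ a ∈ S, F a = ∑ a ∈ S', F a + F m + F 0 := by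
  have e1 : (0 : ℕ) ∉ insert m (S.filter fun s => m < s) := by
    simp; omega
  have e2 : m ∉ S.filter fun s => m < s := by simp
  have e : S = insert 0 (insert m (S.filter fun s => m < s)) := by
    ext s
    simp only [Finset.mem_insert, Finset.mem_filter]
    constructor
    · intro hs
      rcases lt_trichotomy s m with h1 | h1 | h1
      · exact Or.inl (h s hs h1)
      · tauto
      · tauto
    · rintro (rfl | rfl | h1)
      · exact h0
      · exact hm
      · exact h1.1
  have hlt : ∀ s ∈ S.filter fun s => m < s, m < s := by simp
  refine ⟨S.filter fun s => m < s, by simp, ?_, ?_, rfl, ?_, ?_⟩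
  · conv_lhs => rw [e]
    rw [Finset.card_insert_of_notMem e1, Finset.card_insert_of_notMem e2]
  · conv_lhs => rw [e]
    rw [rk_insert le_rfl, rk_all, Finset.card_insert_of_notMem e2]
    intro b hb
    rw [Finset.mem_insert] at hb
    rcases hb with rfl | hb
    · omega
    · have := hlt b hb; omega
  · intro s hs
    have := hlt s hs
    conv_lhs => rw [e]
    rw [rk_insert (by omega), rk_insert (by omega)]
  · conv_lhs => rw [e]
    rw [Finset.sum_insert e1, Finset.sum_insert e2]
    ring

lemma main_cnt (d : ℕ) :
    (∀ p n k, PInv p n Ty.N → (Act p).card = k + 2 → cnt d p = (tri d).1 k) ∧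
    (∀ p n i k, PInv p n (Ty.A i) → (Act p).card = k + 3 → cnt d p = (tri d).2.1 k) ∧
    (∀ p n m k, PInv p n (Ty.B m) → (Act p).card = k + 4 → cnt d p = (tri d).2.2 k) ∧
    (∀ p n, PInv p n Ty.D → 2 ≤ n → cnt d p = ddc d) := by
  induction d with
  | zero => simp [cnt, tri, ddc]
  | succ d ih =>
    obtain ⟨ihN, ihA, ihB, ihD⟩ := ih
    refine ⟨?_, ?_, ?_, ?_⟩
    · intro p n k h hk
      obtain ⟨S', hS, hlt, hc⟩ := split_min (zero_mem_act (p := p)) (fun s _ => Nat.zero_le s)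
      have hn : 0 ∉ S' := fun h => lt_irrefl _ (hlt 0 h)
      have h0 : cnt d (push 0 p) = (tri d).2.1 k := by
        refine ihA _ _ _ _ h.zero ?_
        rw [h.card zero_mem_act (fun s hs => hs), hS, rk_insert le_rfl, rk_all hlt]
        omega
      have h1 : ∀ a ∈ S', cnt d (push a p) = (tri d).1 (rk S' a) := by
        intro a ha
        have haA : a ∈ Act p := by rw [hS]; exact Finset.mem_insert_of_mem ha
        have := hlt a ha
        refine ihN _ _ _ (h.NN haA (by omega)) ?_
        rw [h.card haA (fun s hs => hs), hS, rk_insert (by omega)]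
      simp only [cnt, tri]
      rw [hS, Finset.sum_insert hn, h0, Finset.sum_congr rfl h1, sum_rk, add_comm]
      rw [show S'.card = k + 1 by omega]
    · intro p n i k h hk
      obtain ⟨a1, a2, -, a4, a5⟩ := h.aux
      obtain ⟨S', hS, hc, hr0, hri, hrS, hsum⟩ := split_two zero_mem_act a4 a1 a5
        (fun a => cnt d (push a p))
      have hnA : n ∈ Act p := mem_act.2 ⟨h.len.ge, not_forb_top h.isP⟩
      have h0 : cnt d (push 0 p) = (tri d).2.1 (k + 1) := by
        refine ihA _ _ _ _ h.zero ?_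
        rw [h.card zero_mem_act (fun s hs => by simp only [SpT] at hs; omega), hr0]
        omega
      have hi : cnt d (push i p) = (tri d).2.1 k := by
        refine ihA _ _ _ _ h.AA ?_
        rw [h.card a4 (fun s hs => by simp only [SpT] at hs; omega), hri]
        omega
      have h1 : ∀ a ∈ S', cnt d (push a p) =
          (fun r => if r = 0 then (tri d).1 1 else (tri d).1 r) (rk S' a) := by
        intro a ha
        have ha' := (hS a).1 ha
        have hN := h.AN ha'.1 (by omega) (by omega)
        by_cases han : a = n
        · subst han
          have hr : rk S' a = 0 := by
            simp only [rk, Finset.card_eq_zero, Finset.filter_eq_empty_iff]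
            intro s hs
            have := mem_act.1 ((hS s).1 hs).1
            rw [h.len] at this
            omega
          simp only [hr, if_true]
          refine ihN _ _ _ hN ?_
          rw [h.card' (s₀ := i) ha'.1 (fun s => by simp [SpT]), hrS a ha, hr]
        · have hr : rk S' a ≠ 0 := by
            simp only [rk, ne_eq, Finset.card_eq_zero, Finset.filter_eq_empty_iff]
            intro hh
            have := mem_act.1 ha'.1
            rw [h.len] at this
            exact hh ((hS n).2 ⟨hnA, a2⟩) (by omega)
          simp only [hr, if_false]
          refine ihN _ _ _ hN ?_
          rw [h.card ha'.1 (fun s => by simp [SpT, han]), hrS a ha]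
      simp only [cnt, tri]
      rw [hsum, h0, hi, Finset.sum_congr rfl h1,
        sum_rk (fun r => if r = 0 then (tri d).1 1 else (tri d).1 r), show S'.card = k + 1 by omega,
        Finset.sum_range_succ']
      simp
    · intro p n m k h hk
      obtain ⟨a1, a2, -, a4, a5⟩ := h.aux
      obtain ⟨S', hS, hc, hr0, hri, hrS, hsum⟩ := split_two zero_mem_act a4 a1 a5
        (fun a => cnt d (push a p))
      have h0 : cnt d (push 0 p) = (tri d).2.1 (k + 2) := by
        refine ihA _ _ _ _ h.zero ?_
        rw [h.card zero_mem_act (fun s hs => by simp only [SpT] at hs; omega), hr0]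
        omega
      have hi : cnt d (push m p) = (tri d).2.2 (k + 1) := by
        refine ihB _ _ _ _ h.BB ?_
        rw [h.card' (s₀ := m) a4 (fun s => by simp [SpT]), hri]
        omega
      have h1 : ∀ a ∈ S', cnt d (push a p) = (tri d).1 (rk S' a) := by
        intro a ha
        have ha' := (hS a).1 ha
        refine ihN _ _ _ (h.BN ha'.1 (by omega) (by omega)) ?_
        rw [h.card ha'.1 (fun s hs => by simp only [SpT] at hs; omega), hrS a ha]
      simp only [cnt, tri]
      rw [hsum, h0, hi, Finset.sum_congr rfl h1, sum_rk, show S'.card = k + 2 by omega]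
    · intro p n h hn
      obtain ⟨-, a2⟩ := h.aux
      have e : Act p = {n, n - 1, 0} := by
        ext s
        rw [a2]
        simp only [Finset.mem_insert, Finset.mem_singleton]
        tauto
      have e1 : n ∉ ({n - 1, 0} : Finset ℕ) := by simp; omega
      have e2 : n - 1 ∉ ({0} : Finset ℕ) := by simp; omega
      have h0 : cnt d (push 0 p) = (tri d).2.1 1 := by
        refine ihA _ _ _ _ h.zero ?_
        rw [h.card zero_mem_act (fun s hs => by simp only [SpT] at hs; omega), e]
        have : rk {n, n - 1, 0} 0 = 2 := by
          rw [rk, show ({n, n - 1, 0} : Finset ℕ).filter (fun s => 0 < s) = {n, n - 1} by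
            ext s; simp only [Finset.mem_filter, Finset.mem_insert, Finset.mem_singleton]; omega]
          rw [Finset.card_pair (by omega)]
        rw [this]
      have h1 : cnt d (push (n - 1) p) = (tri d).2.2 0 := by
        refine ihB _ _ _ _ (h.DB hn) ?_
        rw [h.card' (s₀ := n - 1) (by rw [a2]; omega) (fun s => by simp only [SpT, true_and]; omega), e]
        have : rk {n, n - 1, 0} (n - 1) = 1 := by
          rw [rk, show ({n, n - 1, 0} : Finset ℕ).filter (fun s => n - 1 < s) = {n} by
            ext s; simp only [Finset.mem_filter, Finset.mem_insert, Finset.mem_singleton]; omega]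
          simp
        rw [this]
      simp only [cnt, ddc]
      rw [e, Finset.sum_insert e1, Finset.sum_insert e2, Finset.sum_singleton, h0, h1,
        ihD _ _ h.DD (by omega), add_assoc]

lemma cnt_one (d : ℕ) : cnt (d + 1) [0] = ddc d + (tri d).2.1 0 := by
  have h := PInv.base
  obtain ⟨-, a2⟩ := h.aux
  have e : Act [0] = {1, 0} := by
    ext s
    rw [a2]
    simp only [Finset.mem_insert, Finset.mem_singleton]
    omega
  have h0 : cnt d (push 0 [0]) = (tri d).2.1 0 := by
    refine (main_cnt d).2.1 _ _ _ _ h.zero ?_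
    rw [h.card zero_mem_act (fun s hs => by simp only [SpT] at hs; omega), e]
    rfl
  simp only [cnt]
  rw [e, Finset.sum_insert (by simp), Finset.sum_singleton, h0,
    (main_cnt d).2.2.2 _ _ h.DD (by omega)]

lemma cnt_nil (d : ℕ) : cnt (d + 1) [] = cnt d [0] := by
  have : Act [] = {0} := by
    ext s
    simp only [mem_act, Finset.mem_singleton, List.length_nil]
    constructor
    · intro h; omega
    · rintro rfl; exact ⟨le_rfl, not_forb_zero⟩
  simp only [cnt, this, Finset.sum_singleton]
  rfl
/-- list of values of a permutation -/
def toL {n : ℕ} (π : Equiv.Perm (Fin n)) : List ℕ := List.ofFn fun i => (π i).val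

def consP {n : ℕ} (a : Fin (n + 1)) (p : Equiv.Perm (Fin n)) : Equiv.Perm (Fin (n + 1)) :=
  (finSuccEquiv n).trans ((Equiv.optionCongr p).trans (finSuccEquiv' a).symm)

lemma consP_zero {n : ℕ} (a : Fin (n + 1)) (p : Equiv.Perm (Fin n)) : consP a p 0 = a := by
  simp [consP]

lemma consP_succ {n : ℕ} (a : Fin (n + 1)) (p : Equiv.Perm (Fin n)) (i : Fin n) :
    consP a p i.succ = a.succAbove (p i) := by
  simp [consP]

lemma toL_consP {n : ℕ} (a : Fin (n + 1)) (p : Equiv.Perm (Fin n)) :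
    toL (consP a p) = push a.val (toL p) := by
  simp only [toL, push, List.ofFn_succ, consP_zero, consP_succ, List.map_ofFn]
  congr 2
  funext i
  simp only [Function.comp, sh, Fin.succAbove, Fin.lt_def, Fin.val_castSucc]
  split_ifs <;> simp

lemma consP_bij (n : ℕ) : Function.Bijective
    (fun x : Equiv.Perm (Fin n) × Fin (n + 1) => consP x.2 x.1) := by
  rw [Fintype.bijective_iff_injective_and_card]
  constructor
  · rintro ⟨p, a⟩ ⟨q, b⟩ h
    simp only at h
    have hab : a = b := by
      have := congrArg (fun f => f 0) h
      simpa only [consP_zero] using this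
    subst hab
    have : p = q := by
      ext i
      have := congrArg (fun f => f i.succ) h
      simp only [consP_succ] at this
      rw [Fin.succAbove_right_injective this]
    rw [this]
  · simp [Fintype.card_perm, Nat.factorial_succ, mul_comm]

lemma sublist4_toL {n : ℕ} (π : Equiv.Perm (Fin n)) (a b c d : ℕ) :
    [a, b, c, d].Sublist (toL π) ↔ ∃ f : Fin 4 ↪o Fin n,
      a = π (f 0) ∧ b = π (f 1) ∧ c = π (f 2) ∧ d = π (f 3) := by
  rw [List.sublist_iff_exists_fin_orderEmbedding_get_eq]
  have hl : (toL π).length = n := by simp [toL]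
  constructor
  · rintro ⟨f, hf⟩
    refine ⟨f.trans (Fin.castOrderIso hl).toOrderEmbedding, ?_, ?_, ?_, ?_⟩
    · have := hf 0
      simp [toL] at this
      exact this
    · have := hf 1
      simp [toL] at this
      exact this
    · have := hf 2
      simp [toL] at this
      exact this
    · have := hf 3
      simp [toL] at this
      exact this
  · rintro ⟨f, h0, h1, h2, h3⟩
    refine ⟨f.trans (Fin.castOrderIso hl.symm).toOrderEmbedding, ?_⟩
    intro i
    change Fin 4 at i
    fin_cases i
    · simp [toL]
      exact h0
    · simp [toL]
      exact h1
    · simp [toL]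
      exact h2
    · simp [toL]
      exact h3

lemma good_iff {n : ℕ} (π : Equiv.Perm (Fin n)) :
    (∀ σ ∈ ({![1,2,0,3], ![1,3,2,0], ![2,3,0,1]} : Set (Fin 4 → Fin 4)), ¬ ContainsPattern π σ) ↔
      Good (toL π) := by
  simp only [Set.mem_insert_iff, Set.mem_singleton_iff, forall_eq_or_imp, forall_eq, Good,
    sublist4_toL, ContainsPattern]
  constructor
  · rintro ⟨h1, h2, h3⟩ a b c d ⟨f, rfl, rfl, rfl, rfl⟩ hp
    rcases hp with hp | hp | hp
    · refine h1 ⟨f, ?_⟩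
      simp only [Fin.forall_fin_succ, Fin.lt_def]
      simp
      omega
    · refine h2 ⟨f, ?_⟩
      simp only [Fin.forall_fin_succ, Fin.lt_def]
      simp
      omega
    · refine h3 ⟨f, ?_⟩
      simp only [Fin.forall_fin_succ, Fin.lt_def]
      simp
      omega
  · intro h
    refine ⟨?_, ?_, ?_⟩
    · rintro ⟨f, hf⟩
      refine h _ _ _ _ ⟨f, rfl, rfl, rfl, rfl⟩ (Or.inl ⟨?_, ?_, ?_⟩)
      · exact (hf 2 0).1 (by decide)
      · exact (hf 0 1).1 (by decide)
      · exact (hf 1 3).1 (by decide)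
    · rintro ⟨f, hf⟩
      refine h _ _ _ _ ⟨f, rfl, rfl, rfl, rfl⟩ (Or.inr (Or.inl ⟨?_, ?_, ?_⟩))
      · exact (hf 3 0).1 (by decide)
      · exact (hf 0 2).1 (by decide)
      · exact (hf 2 1).1 (by decide)
    · rintro ⟨f, hf⟩
      refine h _ _ _ _ ⟨f, rfl, rfl, rfl, rfl⟩ (Or.inr (Or.inr ⟨?_, ?_, ?_⟩))
      · exact (hf 2 3).1 (by decide)
      · exact (hf 3 0).1 (by decide)
      · exact (hf 0 1).1 (by decide)

open Classical in
noncomputable def tot (n d : ℕ) : ℕ :=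
  ∑ π : Equiv.Perm (Fin n), if Good (toL π) then cnt d (toL π) else 0

lemma tot_succ (n d : ℕ) : tot (n + 1) d = tot n (d + 1) := by
  classical
  unfold tot
  rw [← (consP_bij n).sum_comp, Fintype.sum_prod_type]
  apply Finset.sum_congr rfl
  intro p _
  simp only [toL_consP, good_push]
  by_cases hp : Good (toL p)
  · simp only [hp, true_and, if_true, cnt]
    rw [Fin.sum_univ_eq_sum_range (fun a => if ¬ Forb (toL p) a then cnt d (push a (toL p)) else 0)]
    rw [Act, Finset.sum_filter]
    simp [toL]
  · simp [hp]

lemma tot_add (n d : ℕ) : tot n d = tot 0 (n + d) := by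
  induction n generalizing d with
  | zero => simp
  | succ n ih => rw [tot_succ, ih]; congr 1; omega

lemma count_eq (n : ℕ) :
    avoiderCount ({![1,2,0,3], ![1,3,2,0], ![2,3,0,1]} : Set (Fin 4 → Fin 4)) n = cnt n [] := by
  classical
  have h1 : avoiderCount ({![1,2,0,3], ![1,3,2,0], ![2,3,0,1]} : Set (Fin 4 → Fin 4)) n
      = tot n 0 := by
    unfold avoiderCount tot
    simp only [good_iff]
    rw [Nat.card_eq_fintype_card, Fintype.card_subtype, Finset.card_filter]
    simp only [cnt]
  rw [h1, tot_add]
  unfold tot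
  have : Good [] := by
    intro a b c d h
    simp at h
  simp [toL, this]

theorem statement_12 :
    ((1 : PowerSeries ℚ) - X * (1 - 2*X) * catalanGF^2) * avoiderGF ({![1,2,0,3], ![1,3,2,0], ![2,3,0,1]} : Set (Fin 4 → Fin 4)) =
      1 + X^2 * (1 - X) * catalanGF^4 := by
  apply final_alg
  ext n
  simp only [avoiderGF, count_eq, PowerSeries.coeff_mk]
  match n with
  | 0 => simp [cnt]
  | 1 => 
    rw [cnt_nil, map_add, coeff_succ_X_mul]
    simp [cnt, PowerSeries.coeff_one]
  | n + 2 =>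
    rw [cnt_nil, cnt_one, map_add, coeff_succ_X_mul, map_add, coeff_succ_X_mul]
    simp [gD, gV, PowerSeries.coeff_one]
end

section
/- Let T = {3142, 2314, 1423} (patterns of length 4). Then the generating function for T-avoiders satisfies, as formal power series over ℚ, (1-x)·(1 - 8x + 22x^2 - 24x^3 + 8x^4 - x^5)·F_T(x) = (1-2x)·(1-3x+x^2)^2; that is, F_T(x) = (1-2x)(1-3x+x^2)^2/((1-x)(1-8x+22x^2-24x^3+8x^4-x^5)). -/
open PowerSeries

namespace PA

def Ins (i n : ℕ) (w : ℕ → ℕ) (x : ℕ) : ℕ := if x < i then w x else if x = i then n else w (x-1)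

def Act (n : ℕ) (w : ℕ → ℕ) (i : ℕ) : Prop :=
  (∀ x y z, x < y → y < i → i ≤ z → z < n → w y < w z → w z < w x → False) ∧
  (∀ x y z, x < y → y < z → z < i → w z < w x → w x < w y → False) ∧
  (∀ x y z, x < i → i ≤ y → y < z → z < n → w x < w y → w y < w z → False)

def Av (n : ℕ) (w : ℕ → ℕ) : Prop :=
  ∀ a b c d, a < b → b < c → c < d → d < n →
    ¬ (w b < w d ∧ w d < w a ∧ w a < w c) ∧
    ¬ (w c < w a ∧ w a < w b ∧ w b < w d) ∧
    ¬ (w a < w c ∧ w c < w d ∧ w d < w b)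

structure Ok (n : ℕ) (w : ℕ → ℕ) : Prop where
  lt : ∀ x, x < n → w x < n
  inj : ∀ x y, x < n → y < n → w x = w y → x = y

theorem Ins_lt {i n : ℕ} {w : ℕ → ℕ} {x : ℕ} (h : x < i) : Ins i n w x = w x := by simp [Ins, h]
theorem Ins_self {i n : ℕ} {w : ℕ → ℕ} : Ins i n w i = n := by simp [Ins]
theorem Ins_succ {i n : ℕ} {w : ℕ → ℕ} {x : ℕ} (h : i ≤ x) : Ins i n w (x+1) = w x := by
  have h1 : ¬ (x + 1 < i) := by omega
  have h2 : ¬ (x + 1 = i) := by omega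
  simp [Ins, h1, h2]

theorem pos_cases (i x : ℕ) : x < i ∨ i = x ∨ ∃ y, i ≤ y ∧ x = y + 1 := by
  rcases lt_trichotomy x i with h | h | h
  · exact Or.inl h
  · exact Or.inr (Or.inl h.symm)
  · exact Or.inr (Or.inr ⟨x-1, by omega, by omega⟩)

theorem Ok.ins {n w i} (h : Ok n w) (hi : i ≤ n) : Ok (n+1) (Ins i n w) := by
  constructor
  · intro x hx
    rcases pos_cases i x with h1 | rfl | ⟨y, h1, rfl⟩
    · rw [Ins_lt h1]; have := h.lt x (by omega); omega
    · rw [Ins_self]; omega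
    · rw [Ins_succ h1]; have := h.lt y (by omega); omega
  · intro x y hx hy
    rcases pos_cases i x with h1 | rfl | ⟨x, h1, rfl⟩ <;>
    rcases pos_cases i y with h2 | rfl | ⟨y, h2, rfl⟩ <;>
    simp only [Ins_self, Ins_lt, Ins_succ, *] <;> intro he
    · exact h.inj x y (by omega) (by omega) he
    · have := h.lt x (by omega); omega
    · have := h.inj x y (by omega) (by omega) he; omega
    · have := h.lt y (by omega); omega
    · trivial
    · have := h.lt y (by omega); omega
    · have := h.inj x y (by omega) (by omega) he; omega
    · have := h.lt x (by omega); omega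
    · have := h.inj x y (by omega) (by omega) he; omega

def sh (i x : ℕ) : ℕ := if x < i then x else x + 1

theorem Ins_sh {i n w x} : Ins i n w (sh i x) = w x := by
  unfold sh; split_ifs with h
  · exact Ins_lt h
  · exact Ins_succ (by omega)

theorem sh_lt {i x y} (h : x < y) : sh i x < sh i y := by unfold sh; split_ifs <;> omega
theorem sh_le {i x n} (h : x < n) : sh i x < n + 1 := by unfold sh; split_ifs <;> omega
theorem sh_lo {i x} (h : x < i) : sh i x < i := by unfold sh; split_ifs; omega
theorem sh_hi {i x} (h : i ≤ x) : i < sh i x := by unfold sh; split_ifs <;> omega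

theorem pos_cases' (i x : ℕ) : i = x ∨ ∃ y, x = sh i y := by
  rcases pos_cases i x with h | h | ⟨y, h, rfl⟩
  · exact Or.inr ⟨x, by simp [sh, h]⟩
  · exact Or.inl h
  · exact Or.inr ⟨y, by unfold sh; split_ifs <;> omega⟩

theorem sh_lt_iff {i x y} : sh i x < sh i y ↔ x < y := by unfold sh; split_ifs <;> omega
theorem sh_lo_iff {i x} : sh i x < i ↔ x < i := by unfold sh; split_ifs <;> omega
theorem sh_hi_iff {i x} : i < sh i x ↔ i ≤ x := by unfold sh; split_ifs <;> omega
theorem sh_le_iff {i x n} (hi : i ≤ n) : sh i x < n + 1 ↔ x < n := by unfold sh; split_ifs <;> omega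

theorem av_ins {n w i} (h : Ok n w) (hi : i ≤ n) :
    Av (n+1) (Ins i n w) ↔ Av n w ∧ Act n w i := by
  constructor
  · intro H
    refine ⟨?_, ?_, ?_, ?_⟩
    · intro a b c d h1 h2 h3 h4
      have := H (sh i a) (sh i b) (sh i c) (sh i d) (sh_lt h1) (sh_lt h2) (sh_lt h3) (sh_le h4)
      simpa only [Ins_sh] using this
    · intro x y z h1 h2 h3 h4 h5 h6
      have := (H (sh i x) (sh i y) i (sh i z) (sh_lt h1) (sh_lo h2) (sh_hi h3) (sh_le h4)).1
      simp only [Ins_sh, Ins_self] at this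
      exact this ⟨h5, h6, h.lt x (by omega)⟩
    · intro x y z h1 h2 h3 h5 h6
      have := (H (sh i x) (sh i y) (sh i z) i (sh_lt h1) (sh_lt h2) (sh_lo h3) (by omega)).2.1
      simp only [Ins_sh, Ins_self] at this
      exact this ⟨h5, h6, h.lt y (by omega)⟩
    · intro x y z h1 h2 h3 h4 h5 h6
      have := (H (sh i x) i (sh i y) (sh i z) (sh_lo h1) (sh_hi h2) (sh_lt h3) (sh_le h4)).2.2
      simp only [Ins_sh, Ins_self] at this
      exact this ⟨h5, h6, h.lt z (by omega)⟩
  · rintro ⟨H, A1, A2, A3⟩ a b c d h1 h2 h3 h4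
    have hl := h.lt
    rcases pos_cases' i a with rfl | ⟨a, rfl⟩ <;> rcases pos_cases' i b with rfl | ⟨b, rfl⟩ <;>
    rcases pos_cases' i c with rfl | ⟨c, rfl⟩ <;> rcases pos_cases' i d with rfl | ⟨d, rfl⟩ <;>
    simp only [Ins_self, Ins_sh, sh_lt_iff, sh_lo_iff, sh_hi_iff, sh_le_iff hi, lt_irrefl] at * <;>
    first
    | omega
    | exact H a b c d h1 h2 h3 h4
    | skip
    · have := hl b (by omega); have := hl c (by omega); have := hl d (by omega)
      omega
    · have := hl a (by omega); have := hl c (by omega); have := hl d (by omega)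
      have := A3 a c d h1 h2 h3 h4
      grind
    · have := hl a (by omega); have := hl b (by omega); have := hl d (by omega)
      have := A1 a b d h1 h2 h3 h4
      grind
    · have := hl a (by omega); have := hl b (by omega); have := hl c (by omega)
      have := A2 a b c h1 h2 h3
      grind

theorem act_left {n w i j} (h : Ok n w) (hi : i ≤ n) (hj : j ≤ i) :
    Act (n+1) (Ins i n w) j ↔ Act n w j ∧ ∀ x y, x < j → j ≤ y → y < i → w y < w x := by
  have hl := h.lt
  have hI := h.inj
  constructor
  · rintro ⟨A1, A2, A3⟩
    refine ⟨⟨?_, ?_, ?_⟩, ?_⟩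
    · intro x y z h1 h2 h3 h4 h5 h6
      refine A1 (sh i x) (sh i y) (sh i z) (sh_lt h1) ?_ ?_ (sh_le h4) ?_ ?_
      · unfold sh; split_ifs <;> omega
      · unfold sh; split_ifs <;> omega
      · simpa only [Ins_sh]
      · simpa only [Ins_sh]
    · intro x y z h1 h2 h3 h4 h5
      refine A2 x y z h1 h2 h3 ?_ ?_
      · rwa [Ins_lt (by omega), Ins_lt (by omega)]
      · rwa [Ins_lt (by omega), Ins_lt (by omega)]
    · intro x y z h1 h2 h3 h4 h5 h6
      refine A3 (sh i x) (sh i y) (sh i z) ?_ ?_ (sh_lt h3) (sh_le h4) ?_ ?_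
      · unfold sh; split_ifs <;> omega
      · unfold sh; split_ifs <;> omega
      · simpa only [Ins_sh]
      · simpa only [Ins_sh]
    · intro x y h1 h2 h3
      by_contra h4
      have h5 : w x ≠ w y := fun h5 => by have := hI x y (by omega) (by omega) h5; omega
      refine A3 x y i h1 h2 h3 (by omega) ?_ ?_
      · rw [Ins_lt (by omega), Ins_lt (by omega)]; omega
      · rw [Ins_self, Ins_lt (by omega)]; exact hl y (by omega)
  · rintro ⟨⟨A1, A2, A3⟩, H⟩
    refine ⟨?_, ?_, ?_⟩
    · intro x y z h1 h2 h3 h4 h5 h6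
      rw [Ins_lt (show y < i by omega)] at h5
      rw [Ins_lt (show x < i by omega)] at h6
      rcases pos_cases i z with hz | rfl | ⟨z, hz, rfl⟩
      · rw [Ins_lt hz] at h5 h6
        exact A1 x y z h1 h2 h3 (by omega) h5 h6
      · rw [Ins_self] at h6; have := hl x (by omega); omega
      · rw [Ins_succ hz] at h5 h6
        exact A1 x y z h1 h2 (by omega) (by omega) h5 h6
    · intro x y z h1 h2 h3 h4 h5
      rw [Ins_lt (by omega), Ins_lt (by omega)] at h4 h5
      exact A2 x y z h1 h2 h3 h4 h5
    · intro x y z h1 h2 h3 h4 h5 h6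
      rw [Ins_lt (by omega)] at h5
      rcases pos_cases i y with hy | rfl | ⟨y, hy, rfl⟩
      · rw [Ins_lt hy] at h5 h6
        have := H x y h1 h2 hy
        omega
      · rw [Ins_self] at h6; have := (h.ins hi).lt z (by omega); omega
      · obtain ⟨z, rfl⟩ : ∃ z', z = z' + 1 := ⟨z-1, by omega⟩
        rw [Ins_succ hy] at h5 h6
        rw [Ins_succ (by omega)] at h6
        exact A3 x y z h1 (by omega) (by omega) (by omega) h5 h6

theorem act_right {n w i j} (h : Ok n w) (hi : i ≤ j) (hj : j ≤ n) :
    Act (n+1) (Ins i n w) (j+1) ↔ Act n w j ∧ ∀ y, i ≤ y → y < j →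
      (∀ x, x < i → w x < w y) ∧ (∀ z, j ≤ z → z < n → w z < w y) := by
  have hl := h.lt
  have hI := h.inj
  have hin : i ≤ n := by omega
  constructor
  · rintro ⟨A1, A2, A3⟩
    refine ⟨⟨?_, ?_, ?_⟩, ?_⟩
    · intro x y z h1 h2 h3 h4 h5 h6
      refine A1 (sh i x) (sh i y) (sh i z) (sh_lt h1) ?_ ?_ (sh_le h4) ?_ ?_
      · unfold sh; split_ifs <;> omega
      · unfold sh; split_ifs <;> omega
      · simpa only [Ins_sh]
      · simpa only [Ins_sh]
    · intro x y z h1 h2 h3 h4 h5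
      refine A2 (sh i x) (sh i y) (sh i z) (sh_lt h1) (sh_lt h2) ?_ ?_ ?_
      · unfold sh; split_ifs <;> omega
      · simpa only [Ins_sh]
      · simpa only [Ins_sh]
    · intro x y z h1 h2 h3 h4 h5 h6
      refine A3 (sh i x) (sh i y) (sh i z) ?_ ?_ (sh_lt h3) (sh_le h4) ?_ ?_
      · unfold sh; split_ifs <;> omega
      · unfold sh; split_ifs <;> omega
      · simpa only [Ins_sh]
      · simpa only [Ins_sh]
    · intro y h1 h2
      constructor
      · intro x h3
        by_contra h4
        have h5 : w x ≠ w y := fun h5 => by have := hI x y (by omega) (by omega) h5; omega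
        refine A2 x i (y+1) h3 (by omega) (by omega) ?_ ?_
        · rw [Ins_lt h3, Ins_succ h1]; omega
        · rw [Ins_self, Ins_lt (by omega)]; exact hl x (by omega)
      · intro z h3 h3'
        by_contra h4
        have h5 : w z ≠ w y := fun h5 => by have := hI z y (by omega) (by omega) h5; omega
        refine A1 i (y+1) (z+1) (by omega) (by omega) (by omega) (by omega) ?_ ?_
        · rw [Ins_succ (by omega), Ins_succ (by omega)]; omega
        · rw [Ins_self, Ins_succ (by omega)]; exact hl z (by omega)
  · rintro ⟨⟨A1, A2, A3⟩, H⟩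
    refine ⟨?_, ?_, ?_⟩
    · intro x y z h1 h2 h3 h4 h5 h6
      obtain ⟨z, rfl⟩ : ∃ z', z = z' + 1 := ⟨z-1, by omega⟩
      rw [Ins_succ (by omega)] at h5 h6
      rcases pos_cases' i x with rfl | ⟨x, rfl⟩
      · obtain ⟨y, rfl⟩ : ∃ z', y = z' + 1 := ⟨y-1, by omega⟩
        rw [Ins_succ (by omega)] at h5
        have := (H y (by omega) (by omega)).2 z (by omega) (by omega)
        omega
      rcases pos_cases' i y with rfl | ⟨y, rfl⟩
      · rw [Ins_self] at h5; have := hl z (by omega); omega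
      · rw [Ins_sh] at h5 h6
        have : y < j := by unfold sh at h2; split_ifs at h2 <;> omega
        exact A1 x y z (sh_lt_iff.1 h1) this (by omega) (by omega) h5 h6
    · intro x y z h1 h2 h3 h4 h5
      have hy : Ins i n w y ≤ n := by have := (h.ins hin).lt y (by omega); omega
      rcases pos_cases' i x with rfl | ⟨x, rfl⟩
      · rw [Ins_self] at h5; omega
      rcases pos_cases' i z with rfl | ⟨z, rfl⟩
      · rw [Ins_self] at h4; omega
      rcases pos_cases' i y with rfl | ⟨y, rfl⟩
      · rw [Ins_sh] at h4 h5
        rw [Ins_sh] at h4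
        have h1 := sh_lo_iff.1 h1
        have h2 := sh_hi_iff.1 h2
        have : z < j := by unfold sh at h3; split_ifs at h3 <;> omega
        have := (H z h2 this).1 x h1
        omega
      · rw [Ins_sh] at h4 h5
        rw [Ins_sh] at h4 h5
        have : z < j := by unfold sh at h3; split_ifs at h3 <;> omega
        exact A2 x y z (sh_lt_iff.1 h1) (sh_lt_iff.1 h2) this h4 h5
    · intro x y z h1 h2 h3 h4 h5 h6
      obtain ⟨z, rfl⟩ : ∃ z', z = z' + 1 := ⟨z-1, by omega⟩
      obtain ⟨y, rfl⟩ : ∃ z', y = z' + 1 := ⟨y-1, by omega⟩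
      rw [Ins_succ (by omega)] at h5 h6
      rw [Ins_succ (by omega)] at h6
      rcases pos_cases' i x with rfl | ⟨x, rfl⟩
      · rw [Ins_self] at h5; have := hl y (by omega); omega
      · rw [Ins_sh] at h5
        have : x < j := by unfold sh at h1; split_ifs at h1 <;> omega
        exact A3 x y z this (by omega) (by omega) (by omega) h5 h6

theorem sum_rank (S : Finset ℕ) (g : ℕ → ℕ) :
    ∑ i ∈ S, g (S.filter (· ≤ i)).card = ∑ r ∈ Finset.range S.card, g (r+1) := by
  induction S using Finset.induction_on_max with
  | empty => simp
  | insert a s ha ih =>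
    have hn : a ∉ s := fun h => lt_irrefl _ (ha a h)
    rw [Finset.sum_insert hn, Finset.card_insert_of_notMem hn, Finset.sum_range_succ, ← ih, add_comm]
    congr 1
    · apply Finset.sum_congr rfl
      intro i hi
      congr 2
      have := ha i hi
      grind
    · congr 1
      rw [← Finset.card_insert_of_notMem hn]
      congr 1
      grind

def PS (n : ℕ) (w : ℕ → ℕ) (j : ℕ) : Prop := ∀ x y, x < j → j ≤ y → y < n → w y < w x

theorem PS_ins {n w i j} (h : Ok n w) (hi : i ≤ j) (hj : j ≤ n) :
    PS (n+1) (Ins i n w) (j+1) ↔ PS n w j := by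
  constructor
  · intro H x y h1 h2 h3
    have := H (sh i x) (sh i y) (by unfold sh; split_ifs <;> omega)
      (by unfold sh; split_ifs <;> omega) (sh_le h3)
    simpa only [Ins_sh] using this
  · intro H x y h1 h2 h3
    obtain ⟨y, rfl⟩ : ∃ z', y = z' + 1 := ⟨y-1, by omega⟩
    rw [Ins_succ (by omega)]
    rcases pos_cases' i x with rfl | ⟨x, rfl⟩
    · rw [Ins_self]; exact h.lt y (by omega)
    · rw [Ins_sh]
      exact H x y (by unfold sh at h1; split_ifs at h1 <;> omega) (by omega) (by omega)

open Classical in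
noncomputable def acts (n : ℕ) (w : ℕ → ℕ) : Finset ℕ := (Finset.range (n+1)).filter (Act n w)

theorem mem_acts {n w i} : i ∈ acts n w ↔ i ≤ n ∧ Act n w i := by
  simp [acts]

open Classical in
noncomputable def kk (n : ℕ) (w : ℕ → ℕ) (q : ℕ) : ℕ := ((acts n w).filter (· ≤ q)).card
open Classical in
noncomputable def rr (n : ℕ) (w : ℕ → ℕ) (q : ℕ) : ℕ :=
  ((acts n w).filter (fun j => q < j ∧ ¬ PS n w j)).card
open Classical in
noncomputable def pp (n : ℕ) (w : ℕ → ℕ) (q : ℕ) : ℕ :=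
  ((acts n w).filter (fun j => q < j ∧ PS n w j)).card

def Lc (w : ℕ → ℕ) (i j : ℕ) : Prop := ∀ x y, x < j → j ≤ y → y < i → w y < w x
def Rc (n : ℕ) (w : ℕ → ℕ) (i j : ℕ) : Prop := ∀ y, i ≤ y → y < j →
      (∀ x, x < i → w x < w y) ∧ (∀ z, j ≤ z → z < n → w z < w y)

open Classical in
theorem kk_ins {n w i} (h : Ok n w) (hi : i ≤ n) :
    kk (n+1) (Ins i n w) i = ((acts n w).filter (fun j => j ≤ i ∧ Lc w i j)).card := by
  unfold kk
  congr 1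
  ext j
  simp only [Finset.mem_filter, mem_acts]
  constructor
  · rintro ⟨⟨h1, h2⟩, h3⟩
    rw [act_left h hi h3] at h2
    exact ⟨⟨by omega, h2.1⟩, h3, h2.2⟩
  · rintro ⟨⟨h1, h2⟩, h3, h4⟩
    exact ⟨⟨by omega, (act_left h hi h3).2 ⟨h2, h4⟩⟩, h3⟩

open Classical in
theorem pp_ins {n w i} (h : Ok n w) :
    pp (n+1) (Ins i n w) i =
      ((acts n w).filter (fun j => i ≤ j ∧ Rc n w i j ∧ PS n w j)).card := by
  unfold pp
  symm
  rw [← Finset.card_image_of_injective (f := Nat.succ) _ Nat.succ_injective]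
  symm
  congr 1
  ext j
  simp only [Finset.mem_filter, mem_acts, Finset.mem_image]
  constructor
  · rintro ⟨⟨h1, h2⟩, h3, h4⟩
    obtain ⟨j, rfl⟩ : ∃ z', j = z' + 1 := ⟨j-1, by omega⟩
    rw [act_right h (by omega) (by omega)] at h2
    rw [PS_ins h (by omega) (by omega)] at h4
    exact ⟨j, ⟨⟨by omega, h2.1⟩, by omega, h2.2, h4⟩, rfl⟩
  · rintro ⟨j, ⟨⟨h1, h2⟩, h3, h4, h5⟩, rfl⟩
    exact ⟨⟨by omega, (act_right h h3 h1).2 ⟨h2, h4⟩⟩, by omega, (PS_ins h h3 h1).2 h5⟩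

open Classical in
theorem rr_ins {n w i} (h : Ok n w) :
    rr (n+1) (Ins i n w) i =
      ((acts n w).filter (fun j => i ≤ j ∧ Rc n w i j ∧ ¬ PS n w j)).card := by
  unfold rr
  symm
  rw [← Finset.card_image_of_injective (f := Nat.succ) _ Nat.succ_injective]
  symm
  congr 1
  ext j
  simp only [Finset.mem_filter, mem_acts, Finset.mem_image]
  constructor
  · rintro ⟨⟨h1, h2⟩, h3, h4⟩
    obtain ⟨j, rfl⟩ : ∃ z', j = z' + 1 := ⟨j-1, by omega⟩
    rw [act_right h (by omega) (by omega)] at h2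
    rw [PS_ins h (by omega) (by omega)] at h4
    exact ⟨j, ⟨⟨by omega, h2.1⟩, by omega, h2.2, h4⟩, rfl⟩
  · rintro ⟨j, ⟨⟨h1, h2⟩, h3, h4, h5⟩, rfl⟩
    exact ⟨⟨by omega, (act_right h h3 h1).2 ⟨h2, h4⟩⟩, by omega,
      fun h => h5 ((PS_ins (by assumption) h3 h1).1 h)⟩

structure Good (n : ℕ) (w : ℕ → ℕ) (q : ℕ) : Prop where
  ok : Ok n w
  hq : q < n
  mx : w q + 1 = n
  a0 : Act n w 0
  aq : Act n w q
  aq1 : Act n w (q+1)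
  hL : ∀ j, j ≤ q → Act n w j → Lc w q j
  hR : ∀ j, q < j → j ≤ n → Act n w j → Rc n w q j

theorem Good.ins {n w q i} (h : Good n w q) (hi : i ≤ n) (ha : Act n w i) :
    Good (n+1) (Ins i n w) i where
  ok := h.ok.ins hi
  hq := by omega
  mx := by rw [Ins_self]
  a0 := (act_left h.ok hi (by omega)).2 ⟨h.a0, by intro x y hx; omega⟩
  aq := (act_left h.ok hi le_rfl).2 ⟨ha, by intro x y _ _ _; omega⟩
  aq1 := (act_right h.ok le_rfl hi).2 ⟨ha, by intro x _ _; omega⟩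
  hL := by
    intro j hj hA
    have H := ((act_left h.ok hi hj).1 hA).2
    intro x y h1 h2 h3
    rw [Ins_lt (by omega), Ins_lt (by omega)]
    exact H x y h1 h2 h3
  hR := by
    intro j hj hjn hA
    obtain ⟨j, rfl⟩ : ∃ z', j = z' + 1 := ⟨j-1, by omega⟩
    have H := ((act_right h.ok (by omega) (by omega)).1 hA).2
    intro y h1 h2
    have hlt := h.ok.lt
    rcases pos_cases i y with h3 | rfl | ⟨y, h3, rfl⟩
    · omega
    · rw [Ins_self]
      refine ⟨fun x hx => ?_, fun z hz hz' => ?_⟩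
      · rw [Ins_lt hx]; exact hlt x (by omega)
      · obtain ⟨z, rfl⟩ : ∃ z', z = z' + 1 := ⟨z-1, by omega⟩
        rw [Ins_succ (by omega)]; exact hlt z (by omega)
    · rw [Ins_succ h3]
      have H := H y h3 (by omega)
      refine ⟨fun x hx => ?_, fun z hz hz' => ?_⟩
      · rw [Ins_lt hx]; exact H.1 x hx
      · obtain ⟨z, rfl⟩ : ∃ z', z = z' + 1 := ⟨z-1, by omega⟩
        rw [Ins_succ (by omega)]; exact H.2 z (by omega) (by omega)

noncomputable def D : ℕ → ℕ → (ℕ → ℕ) → ℕ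
  | 0, _, _ => 1
  | d+1, n, w => ∑ i ∈ acts n w, D d (n+1) (Ins i n w)

def F : ℕ → ℕ → ℕ → ℕ → ℕ
  | 0, _, _, _ => 1
  | d+1, k, r, p => if k ≤ 1 then F d 1 0 (p+1) + ∑ t ∈ Finset.range p, F d (t+2) 0 1
      else F d k (r+1) p + ∑ j ∈ Finset.range (k-2), F d (j+2) 1 0 + F d 1 0 (p+1)
        + r * F d 2 1 0 + p * F d 2 0 1

theorem Good.wlt {n w q} (h : Good n w q) {x : ℕ} (hx : x < n) (hxq : x ≠ q) : w x < w q := by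
  have h1 := h.ok.lt x hx
  have h2 := h.mx
  have h3 : w x ≠ w q := fun h3 => hxq (h.ok.inj x q hx h.hq h3)
  omega

-- labels of children, case q = 0
open Classical in
theorem step_zero {n w} (h : Good n w 0) {i : ℕ} (hi : i ≤ n) (ha : Act n w i) (hpos : 0 < i) :
    kk (n+1) (Ins i n w) i = ((acts n w).filter (· ≤ i)).card ∧
    rr (n+1) (Ins i n w) i = 0 ∧ pp (n+1) (Ins i n w) i = 1 := by
  have hps : ∀ j, 0 < j → j ≤ n → Act n w j → PS n w j := by
    intro j h1 h2 h3 x y h4 h5 h6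
    exact ((h.hR j h1 h2 h3) x (by omega) h4).2 y h5 h6
  have hn : ∀ j, i < j → j ≤ n → ¬ Rc n w i j := by
    intro j h1 hjn h2
    have := (h2 i le_rfl h1).1 0 hpos
    have := h.wlt (show i < n by omega) (by omega); omega
  rw [kk_ins h.ok hi, rr_ins h.ok, pp_ins h.ok]
  refine ⟨?_, ?_, ?_⟩
  · congr 1
    ext j
    simp only [Finset.mem_filter, mem_acts]
    constructor
    · tauto
    · rintro ⟨⟨h1, h2⟩, h3⟩
      refine ⟨⟨h1, h2⟩, h3, ?_⟩
      rcases Nat.eq_zero_or_pos j with rfl | hj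
      · intro x y; omega
      · intro x y h4 h5 h6
        exact hps j hj h1 h2 x y h4 h5 (by omega)
  · rw [Finset.card_eq_zero, Finset.filter_eq_empty_iff]
    rintro j hj ⟨h1, h2, h3⟩
    rw [mem_acts] at hj
    exact h3 (hps j (by omega) hj.1 hj.2)
  · rw [Finset.card_eq_one]
    refine ⟨i, ?_⟩
    ext j
    simp only [Finset.mem_filter, mem_acts, Finset.mem_singleton]
    constructor
    · rintro ⟨h1, h2, h3, h4⟩
      by_contra hne
      exact hn j (by omega) h1.1 h3
    · rintro rfl
      exact ⟨⟨hi, ha⟩, le_rfl, fun y _ _ => by omega, hps j hpos hi ha⟩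

open Classical in
theorem kk_ins_zero {n w} (h : Ok n w) (h0 : Act n w 0) : kk (n+1) (Ins 0 n w) 0 = 1 := by
  rw [kk_ins h (by omega), Finset.card_eq_one]
  refine ⟨0, ?_⟩
  ext j
  simp only [Finset.mem_filter, mem_acts, Finset.mem_singleton]
  constructor
  · rintro ⟨_, h1, _⟩; omega
  · rintro rfl
    exact ⟨⟨by omega, h0⟩, by omega, fun x y _ _ _ => by omega⟩

open Classical in
theorem rr_ins_zero {n w} (h : Ok n w) : rr (n+1) (Ins 0 n w) 0 = 0 := by
  rw [rr_ins h, Finset.card_eq_zero, Finset.filter_eq_empty_iff]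
  rintro j hj ⟨h1, h2, h3⟩
  apply h3
  intro x y h4 h5 h6
  exact (h2 x (by omega) h4).2 y h5 h6

open Classical in
theorem pp_ins_zero {n w q} (h : Good n w q) :
    pp (n+1) (Ins 0 n w) 0 = pp n w q + 1 := by
  rw [pp_ins h.ok]
  unfold pp
  rw [← Finset.card_insert_of_notMem (a := 0) (by simp)]
  congr 1
  ext j
  simp only [Finset.mem_filter, mem_acts, Finset.mem_insert]
  constructor
  · rintro ⟨h1, h2, h3, h4⟩
    by_cases hj : q < j
    · exact Or.inr ⟨h1, hj, h4⟩
    · left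
      by_contra hne
      have := h4 0 q (by omega) (by omega) h.hq
      have hm := h.mx
      have := h.ok.lt 0 (by have := h.hq; omega)
      omega
  · rintro (rfl | ⟨h1, h2, h3⟩)
    · exact ⟨⟨by omega, h.a0⟩, by omega, fun y _ _ => by omega, fun x y _ => by omega⟩
    · exact ⟨h1, by omega, fun y _ h5 => ⟨fun x _ => by omega, fun z h6 h7 => h3 y z h5 h6 h7⟩, h3⟩

open Classical in
theorem D_zero {n w d} (h : Good n w 0) (hk : kk n w 0 = 1) (hr : rr n w 0 = 0)
    (ih : ∀ i, i ≤ n → Act n w i → D d (n+1) (Ins i n w) =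
      F d (kk (n+1) (Ins i n w) i) (rr (n+1) (Ins i n w) i) (pp (n+1) (Ins i n w) i)) :
    D (d+1) n w = F (d+1) (kk n w 0) (rr n w 0) (pp n w 0) := by
  have hcard : (acts n w).card = pp n w 0 + 1 := by
    have e : acts n w = (acts n w).filter (· ≤ 0) ∪
      ((acts n w).filter (fun j => 0 < j ∧ PS n w j) ∪
        (acts n w).filter (fun j => 0 < j ∧ ¬ PS n w j)) := by
      ext j; simp only [Finset.mem_union, Finset.mem_filter]
      by_cases h1 : j ≤ 0 <;> by_cases h2 : PS n w j <;> simp [h1, h2] <;> omega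
    rw [e, Finset.card_union_of_disjoint, Finset.card_union_of_disjoint]
    · unfold kk at hk; unfold rr at hr; unfold pp; omega
    · rw [Finset.disjoint_left]; simp only [Finset.mem_filter]; tauto
    · rw [Finset.disjoint_left]; simp only [Finset.mem_filter, Finset.mem_union]
      rintro a ⟨_, h1⟩ h2
      have : 0 < a := by tauto
      omega
  rw [hk, hr]
  let g : ℕ → ℕ := fun r => if r = 1 then F d 1 0 (pp n w 0 + 1) else F d r 0 1
  have key : ∀ i ∈ acts n w, D d (n+1) (Ins i n w) = g ((acts n w).filter (· ≤ i)).card := by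
    intro i hi
    rw [mem_acts] at hi
    rw [ih i hi.1 hi.2]
    rcases Nat.eq_zero_or_pos i with rfl | hpos
    · rw [kk_ins_zero h.ok h.a0, rr_ins_zero h.ok, pp_ins_zero h]
      unfold kk at hk
      rw [hk]
      simp [g]
    · obtain ⟨h1, h2, h3⟩ := step_zero h hi.1 hi.2 hpos
      rw [h1, h2, h3]
      have : 1 < ((acts n w).filter (· ≤ i)).card := by
        rw [Finset.one_lt_card]
        refine ⟨0, ?_, i, ?_, by omega⟩
        · simp [mem_acts, h.a0]
        · simp [mem_acts, hi]
      simp only [g]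
      rw [if_neg (by omega)]
  rw [D, Finset.sum_congr rfl key, sum_rank, hcard, Finset.sum_range_succ', F, if_pos le_rfl, add_comm]
  simp [g]

-- q > 0
open Classical in
theorem step_q {n w q} (h : Good n w q) (hq : 0 < q) :
    kk (n+1) (Ins q n w) q = kk n w q ∧
    rr (n+1) (Ins q n w) q = rr n w q + 1 ∧ pp (n+1) (Ins q n w) q = pp n w q := by
  have hqn := h.hq
  have hnp : ¬ PS n w q := by
    intro H
    have := H 0 q hq le_rfl h.hq
    have := h.wlt (x := 0) (by omega) (by omega)
    omega
  rw [kk_ins h.ok h.hq.le, rr_ins h.ok, pp_ins h.ok]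
  unfold kk rr pp
  refine ⟨?_, ?_, ?_⟩
  · congr 1
    ext j
    simp only [Finset.mem_filter, mem_acts]
    have := h.hL j
    tauto
  · rw [← Finset.card_insert_of_notMem (a := q) (by simp)]
    congr 1
    ext j
    simp only [Finset.mem_filter, mem_acts, Finset.mem_insert]
    constructor
    · rintro ⟨h1, h2, h3, h4⟩
      rcases h2.eq_or_lt with h5 | h5
      · exact Or.inl h5.symm
      · exact Or.inr ⟨h1, h5, h4⟩
    · rintro (rfl | ⟨h1, h2, h3⟩)
      · exact ⟨⟨by omega, h.aq⟩, by omega, fun y _ _ => by omega, hnp⟩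
      · exact ⟨h1, by omega, h.hR j h2 h1.1 h1.2, h3⟩
  · congr 1
    ext j
    simp only [Finset.mem_filter, mem_acts]
    constructor
    · rintro ⟨h1, h2, h3, h4⟩
      rcases h2.eq_or_lt with h5 | h5
      · subst h5; exact absurd h4 hnp
      · exact ⟨h1, h5, h4⟩
    · rintro ⟨h1, h2, h3⟩
      exact ⟨h1, by omega, h.hR j h2 h1.1 h1.2, h3⟩

open Classical in
theorem rp_single {n w i} (h : Ok n w) (hi : i ≤ n) (ha : Act n w i)
    (hn : ∀ j, i < j → j ≤ n → Act n w j → ¬ Rc n w i j) :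
    rr (n+1) (Ins i n w) i = (if PS n w i then 0 else 1) ∧
    pp (n+1) (Ins i n w) i = (if PS n w i then 1 else 0) := by
  have e : ∀ (Q : ℕ → Prop), ((acts n w).filter (fun j => i ≤ j ∧ Rc n w i j ∧ Q j)).card =
      if Q i then 1 else 0 := by
    intro Q
    have : (acts n w).filter (fun j => i ≤ j ∧ Rc n w i j ∧ Q j) = if Q i then {i} else ∅ := by
      ext j
      simp only [Finset.mem_filter, mem_acts]
      constructor
      · rintro ⟨h1, h2, h3, h4⟩
        rcases h2.eq_or_lt with h5 | h5
        · subst h5; simp [h4]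
        · exact absurd h3 (hn j h5 h1.1 h1.2)
      · intro hj
        split_ifs at hj with hQ
        · rw [Finset.mem_singleton] at hj; subst hj
          exact ⟨⟨hi, ha⟩, le_rfl, fun y _ _ => by omega, hQ⟩
        · simp at hj
    rw [this]; split_ifs <;> simp
  have e1 := e (fun j => ¬ PS n w j)
  have e2 := e (fun j => PS n w j)
  rw [rr_ins h, pp_ins h]
  constructor
  · by_cases h : PS n w i <;> simp [h] at e1 ⊢ <;> convert e1
  · exact e2

open Classical in
theorem step_mid {n w q i} (h : Good n w q) (ha : Act n w i) (hpos : 0 < i) (hiq : i < q) :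
    kk (n+1) (Ins i n w) i = ((acts n w).filter (· ≤ i)).card ∧
    rr (n+1) (Ins i n w) i = 1 ∧ pp (n+1) (Ins i n w) i = 0 := by
  have hqn := h.hq
  have hLi := h.hL i hiq.le ha
  have hn : ∀ j, i < j → j ≤ n → Act n w j → ¬ Rc n w i j := by
    intro j h1 h2 h3 h4
    have h5 := (h4 i le_rfl h1).1 0 hpos
    have h6 := hLi 0 i hpos le_rfl hiq
    omega
  have hnp : ¬ PS n w i := by
    intro H
    have := H 0 q hpos hiq.le h.hq
    have := h.wlt (x := 0) (by omega) (by omega)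
    omega
  obtain ⟨e1, e2⟩ := rp_single h.ok (by omega) ha hn
  refine ⟨?_, by rw [e1, if_neg hnp], by rw [e2, if_neg hnp]⟩
  rw [kk_ins h.ok (by omega)]
  congr 1
  ext j
  simp only [Finset.mem_filter, mem_acts]
  constructor
  · tauto
  · rintro ⟨⟨h1, h2⟩, h3⟩
    exact ⟨⟨h1, h2⟩, h3, fun x y h4 h5 h6 => h.hL j (by omega) h2 x y h4 h5 (by omega)⟩

open Classical in
theorem step_right {n w q i} (h : Good n w q) (hq : 0 < q) (hi : i ≤ n) (ha : Act n w i)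
    (hiq : q < i) :
    kk (n+1) (Ins i n w) i = 2 ∧
    rr (n+1) (Ins i n w) i = (if PS n w i then 0 else 1) ∧
    pp (n+1) (Ins i n w) i = (if PS n w i then 1 else 0) := by
  have hqn := h.hq
  have hRi := h.hR i hiq hi ha
  have hn : ∀ j, i < j → j ≤ n → Act n w j → ¬ Rc n w i j := by
    intro j h1 h2 h3 h4
    have h5 := (h4 i le_rfl h1).1 q hiq
    have h6 := h.wlt (x := i) (by omega) (by omega)
    omega
  refine ⟨?_, rp_single h.ok hi ha hn⟩
  rw [kk_ins h.ok hi, Finset.card_eq_two]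
  refine ⟨0, i, by omega, ?_⟩
  ext j
  simp only [Finset.mem_filter, mem_acts, Finset.mem_insert, Finset.mem_singleton]
  constructor
  · rintro ⟨⟨h1, h2⟩, h3, h4⟩
    by_contra hne
    push Not at hne
    by_cases hjq : j ≤ q
    · have h5 := h4 0 q (by omega) hjq hiq
      have h6 := h.wlt (x := 0) (by omega) (by omega)
      omega
    · have h5 := h4 0 j (by omega) le_rfl (by omega)
      have h6 := (hRi j (by omega) (by omega)).1 0 hq
      omega
  · rintro (rfl | rfl)
    · exact ⟨⟨by omega, h.a0⟩, by omega, fun x y _ => by omega⟩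
    · exact ⟨⟨hi, ha⟩, le_rfl, fun x y _ _ _ => by omega⟩

open Classical in
theorem D_pos {n w q d} (h : Good n w q) (hq : 0 < q)
    (ih : ∀ i, i ≤ n → Act n w i → D d (n+1) (Ins i n w) =
      F d (kk (n+1) (Ins i n w) i) (rr (n+1) (Ins i n w) i) (pp (n+1) (Ins i n w) i)) :
    D (d+1) n w = F (d+1) (kk n w q) (rr n w q) (pp n w q) := by
  have hqn := h.hq
  have e : acts n w = (acts n w).filter (· ≤ q) ∪
      ((acts n w).filter (fun j => q < j ∧ PS n w j) ∪
        (acts n w).filter (fun j => q < j ∧ ¬ PS n w j)) := by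
      ext j; simp only [Finset.mem_union, Finset.mem_filter]
      by_cases h1 : j ≤ q <;> by_cases h2 : PS n w j <;> simp [h1, h2] <;> omega
  have s3 : ∑ i ∈ (acts n w).filter (fun j => q < j ∧ ¬ PS n w j), D d (n+1) (Ins i n w) =
      rr n w q * F d 2 1 0 := by
    unfold rr
    rw [← smul_eq_mul, ← Finset.sum_const]
    refine Finset.sum_congr rfl fun i hi => ?_
    simp only [Finset.mem_filter, mem_acts] at hi
    obtain ⟨⟨h1, h2⟩, h3, h4⟩ := hi
    obtain ⟨e1, e2, e3⟩ := step_right h hq h1 h2 h3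
    rw [ih i h1 h2, e1, e2, e3, if_neg h4, if_neg h4]
  have s2 : ∑ i ∈ (acts n w).filter (fun j => q < j ∧ PS n w j), D d (n+1) (Ins i n w) =
      pp n w q * F d 2 0 1 := by
    unfold pp
    rw [← smul_eq_mul, ← Finset.sum_const]
    refine Finset.sum_congr rfl fun i hi => ?_
    simp only [Finset.mem_filter, mem_acts] at hi
    obtain ⟨⟨h1, h2⟩, h3, h4⟩ := hi
    obtain ⟨e1, e2, e3⟩ := step_right h hq h1 h2 h3
    rw [ih i h1 h2, e1, e2, e3, if_pos h4, if_pos h4]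
  have hk2 : 2 ≤ kk n w q := by
    unfold kk
    show 1 < _
    rw [Finset.one_lt_card]
    refine ⟨0, ?_, q, ?_, by omega⟩
    · simp [mem_acts, h.a0]
    · simp [mem_acts, h.aq, h.hq.le]
  let g : ℕ → ℕ := fun r => if r = 1 then F d 1 0 (pp n w q + 1) else
    if r = kk n w q then F d (kk n w q) (rr n w q + 1) (pp n w q) else F d r 1 0
  have hfil : ∀ i, i ≤ q → ((acts n w).filter (· ≤ q)).filter (· ≤ i) =
      (acts n w).filter (· ≤ i) := by
    intro i hi
    ext j; simp only [Finset.mem_filter]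
    constructor
    · tauto
    · rintro ⟨h1, h2⟩; exact ⟨⟨h1, by omega⟩, h2⟩
  have key : ∀ i ∈ (acts n w).filter (· ≤ q), D d (n+1) (Ins i n w) =
      g (((acts n w).filter (· ≤ q)).filter (· ≤ i)).card := by
    intro i hi
    simp only [Finset.mem_filter, mem_acts] at hi
    obtain ⟨⟨hin, ha⟩, hiq⟩ := hi
    rw [ih i hin ha, hfil i hiq]
    rcases Nat.eq_zero_or_pos i with rfl | hpos
    · have : (acts n w).filter (· ≤ 0) = {0} := by
        ext j
        simp only [Finset.mem_filter, mem_acts, Finset.mem_singleton]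
        constructor
        · omega
        · rintro rfl; exact ⟨⟨hin, ha⟩, le_rfl⟩
      rw [kk_ins_zero h.ok h.a0, rr_ins_zero h.ok, pp_ins_zero h, this]
      simp [g]
    rcases hiq.eq_or_lt with rfl | hlt
    · obtain ⟨e1, e2, e3⟩ := step_q h hq
      rw [e1, e2, e3]
      show _ = g (kk n w i)
      simp only [g]
      rw [if_neg (by omega)]; simp
    · obtain ⟨e1, e2, e3⟩ := step_mid h ha hpos hlt
      rw [e1, e2, e3]
      have l1 : 1 < ((acts n w).filter (· ≤ i)).card := by
        rw [Finset.one_lt_card]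
        refine ⟨0, ?_, i, ?_, by omega⟩
        · simp [mem_acts, h.a0]
        · simp [mem_acts, hin, ha]
      have l2 : ((acts n w).filter (· ≤ i)).card < kk n w q := by
        unfold kk
        apply Finset.card_lt_card
        rw [Finset.ssubset_iff_of_subset]
        · refine ⟨q, ?_, ?_⟩
          · simp [mem_acts, h.aq, h.hq.le]
          · simp; omega
        · intro j; simp only [Finset.mem_filter]
          rintro ⟨h1, h2⟩; exact ⟨h1, by omega⟩
      simp only [g]
      rw [if_neg (by omega), if_neg (by omega)]
  have s1 : ∑ i ∈ (acts n w).filter (· ≤ q), D d (n+1) (Ins i n w) =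
      F d (kk n w q) (rr n w q + 1) (pp n w q) + ∑ j ∈ Finset.range (kk n w q - 2), F d (j+2) 1 0
        + F d 1 0 (pp n w q +1) := by
    rw [Finset.sum_congr rfl key, sum_rank]
    obtain ⟨k, hk⟩ : ∃ k, kk n w q = k + 2 := ⟨kk n w q - 2, by omega⟩
    change ∑ r ∈ Finset.range (kk n w q), g (r+1) = _
    have g1 : g 1 = F d 1 0 (pp n w q + 1) := by simp [g]
    have g2 : g (k+1+1) = F d (kk n w q) (rr n w q + 1) (pp n w q) := by
      simp only [g]; rw [if_neg (by omega), if_pos (by omega)]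
    have g3 : ∀ j ∈ Finset.range k, g (j + 1 + 1) = F d (j+2) 1 0 := by
      intro j hj
      rw [Finset.mem_range] at hj
      simp only [g]; rw [if_neg (by omega), if_neg (by omega)]
    have : kk n w q - 2 = k := by omega
    rw [this]
    conv_lhs => rw [hk]
    rw [Finset.sum_range_succ, g2, Finset.sum_range_succ', Finset.sum_congr rfl g3, g1]
    ring
  rw [D, F, if_neg (by omega)]
  conv_lhs => rw [e]
  rw [Finset.sum_union, Finset.sum_union, s1, s2, s3]
  · ring
  · rw [Finset.disjoint_left]; simp only [Finset.mem_filter]; tauto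
  · rw [Finset.disjoint_left]; simp only [Finset.mem_filter, Finset.mem_union]
    rintro a ⟨_, h1⟩ h2
    have : q < a := by tauto
    omega

theorem D_eq (d : ℕ) : ∀ n w q, Good n w q → D d n w = F d (kk n w q) (rr n w q) (pp n w q) := by
  induction d with
  | zero => intros; rfl
  | succ d ih =>
    intro n w q h
    have ih' := fun i hi ha => ih (n+1) (Ins i n w) i (h.ins hi ha)
    rcases Nat.eq_zero_or_pos q with rfl | hq
    · refine D_zero h ?_ ?_ ih'
      · classical
        unfold kk
        rw [Finset.card_eq_one]
        refine ⟨0, ?_⟩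
        ext j
        simp only [Finset.mem_filter, mem_acts, Finset.mem_singleton]
        constructor
        · omega
        · rintro rfl; exact ⟨⟨by omega, h.a0⟩, le_rfl⟩
      · classical
        unfold rr
        rw [Finset.card_eq_zero, Finset.filter_eq_empty_iff]
        rintro j hj ⟨h1, h3⟩
        rw [mem_acts] at hj
        apply h3
        intro x y h4 h5 h6
        exact (h.hR j h1 hj.1 hj.2 x (by omega) h4).2 y h5 h6
    · exact D_pos h hq ih'

theorem ps_zero (u : ℕ → PowerSeries ℚ) (h : ∀ m, u m = X * u (m+1)) : ∀ m, u m = 0 := by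
  have : ∀ N m, coeff N (u m) = 0 := by
    intro N
    induction N with
    | zero => intro m; rw [h m]; simp
    | succ N ih => intro m; rw [h m, coeff_succ_X_mul]; exact ih _
  intro m; ext N; simp [this]

noncomputable def PF (k r p : ℕ) : PowerSeries ℚ := PowerSeries.mk fun d => (F d k r p : ℚ)

theorem ext_shift (f g : PowerSeries ℚ) (h0 : coeff 0 f = 1)
    (h : ∀ d, coeff (d+1) f = coeff d g) : f = 1 + X * g := by
  ext d
  cases d with
  | zero => simpa using h0
  | succ d => rw [h, map_add, coeff_succ_X_mul]; simp [coeff_one]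

theorem PF_one (p : ℕ) : PF 1 0 p = 1 + X * (PF 1 0 (p+1) + ∑ t ∈ Finset.range p, PF (t+2) 0 1) := by
  apply ext_shift
  · simp [PF, F]
  · intro d; simp [PF, F]

theorem PF_two (k r p : ℕ) : PF (k+2) r p = 1 + X * (PF (k+2) (r+1) p +
    ∑ j ∈ Finset.range k, PF (j+2) 1 0 + PF 1 0 (p+1) + (r : PowerSeries ℚ) * PF 2 1 0
      + (p : PowerSeries ℚ) * PF 2 0 1) := by
  have hc : ∀ (a : ℕ), (a : PowerSeries ℚ) = PowerSeries.C (a : ℚ) := by intro a; simp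
  apply ext_shift
  · simp [PF, F]
  · intro d; rw [hc, hc]; simp only [map_add, coeff_C_mul, map_sum]; simp [PF, F]

theorem one_sub_X_ne : (1 - X : PowerSeries ℚ) ≠ 0 := by
  intro h
  have := congrArg (coeff 0) h
  simp at this

theorem PF_r (k p : ℕ) : ∀ r, (1 - X) * (PF (k+2) (r+1) p - PF (k+2) r p) = X * PF 2 1 0 := by
  have := ps_zero (fun r => (1 - X) * (PF (k+2) (r+1) p - PF (k+2) r p) - X * PF 2 1 0) (by
    intro r
    have h1 := PF_two k r p
    have h2 := PF_two k (r+1) p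
    push_cast at h2
    linear_combination (1-X) * h2 - (1-X) * h1)
  intro r
  linear_combination this r

theorem C_rec (k : ℕ) : (1 - X) * PF (k+3) 1 0 = PF (k+2) 1 0 := by
  apply mul_left_cancel₀ one_sub_X_ne
  have h1 := PF_two k 1 0
  have h2 := PF_two (k+1) 1 0
  rw [Finset.sum_range_succ] at h2
  have h3 := PF_r k 0 1
  have h4 := PF_r (k+1) 0 1
  simp only [show k + 1 + 2 = k + 3 from rfl, show (1:ℕ) + 1 = 2 from rfl] at *
  linear_combination (1-X) * h2 - (1-X)*h1 + X * h4 - X * h3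

theorem E_C (k : ℕ) : (1 - X) * (PF (k+2) 0 1 - PF (k+2) 1 0) =
    X * (PF 1 0 2 - PF 1 0 1 + PF 2 0 1 - PF 2 1 0) := by
  apply mul_left_cancel₀ one_sub_X_ne
  have h1 := PF_two k 1 0
  have h2 := PF_two k 0 1
  have h3 := PF_r k 0 1
  have h4 := PF_r k 1 0
  simp only [show (1:ℕ) + 1 = 2 from rfl, show (0:ℕ) + 1 = 1 from rfl] at *
  push_cast at *
  linear_combination (1-X) * h2 - (1-X)*h1 + X * h4 - X * h3

theorem E_C' (k : ℕ) : PF (k+2) 0 1 - PF (k+2) 1 0 = PF 2 0 1 - PF 2 1 0 := by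
  apply mul_left_cancel₀ one_sub_X_ne
  rw [E_C, ← E_C 0]

theorem U_eq : ∀ m, (1 - 2 * X) * (1 - X) * (PF 1 0 (m+1) - PF 1 0 m) =
    (1 - X)^2 * X * PF (m+2) 1 0 + (1 - 2 * X) * X * (PF 2 0 1 - PF 2 1 0) := by
  have := ps_zero (fun m => (1 - 2 * X) * (1 - X) * (PF 1 0 (m+1) - PF 1 0 m) -
    ((1 - X)^2 * X * PF (m+2) 1 0 + (1 - 2 * X) * X * (PF 2 0 1 - PF 2 1 0))) (by
    intro m
    have h1 := PF_one m
    have h2 := PF_one (m+1)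
    rw [Finset.sum_range_succ] at h2
    have h3 := E_C' m
    have h4 := C_rec m
    simp only [show m + 1 + 2 = m + 3 from rfl] at *
    linear_combination (1 - 2 * X) * (1 - X) * h2 - (1 - 2 * X) * (1 - X) * h1
      + (1 - 2 * X) * (1 - X) * X * h3 + (1 - X) * X^2 * h4)
  intro m
  linear_combination this m

theorem final_alg : ((1 : PowerSeries ℚ) - X) * (1 - 8*X + 22*X^2 - 24*X^3 + 8*X^4 - X^5) *
    (1 + X * PF 1 0 1) = (1 - 2*X) * (1 - 3*X + X^2)^2 := by
  have h2 := E_C 0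
  have hu := U_eq 1
  have h3 := PF_one 1
  have h4 := PF_two 0 1 0
  have h5 := PF_r 0 0 1
  have h6 := C_rec 0
  simp only [Finset.sum_range_one, Finset.sum_range_zero, zero_add, Nat.reduceAdd,
    Nat.cast_one, Nat.cast_zero] at *
  generalize PF 1 0 1 = A at *
  generalize PF 1 0 2 = A2 at *
  generalize PF 2 1 0 = C2 at *
  generalize PF 2 2 0 = C22 at *
  generalize PF 3 1 0 = C3 at *
  generalize PF 2 0 1 = E2 at *
  have k2 : (1 - 2*X) * (E2 - C2) = X * (A2 - A) := by linear_combination h2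
  have k1 : (A2 - A) * (1 - 3*X + X^2) = X * (1 - X) * C2 := by
    linear_combination hu + (1 - X) * X * h6 + X * k2
  have k3 : (1 - X) * A = 1 + X * ((A2 - A) + C2 + (E2 - C2)) := by linear_combination h3
  have k4 : (1 - 3*X + X^2) * C2 = (1 - X) * (1 + X * A) := by
    linear_combination (1 - X) * h4 + X * h5
  linear_combination X * (1 - 2*X) * (1 - 3*X + X^2)^2 * k3 + X^2 * (1 - 3*X + X^2)^2 * k2 + X^2 * (1 - 3*X + X^2) * (1-X) * k1
    + (X^2 * (1-2*X) * (1 - 3*X + X^2) + X^3 * (1-X)^2) * k4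

def raw {n : ℕ} (π : Equiv.Perm (Fin n)) (x : ℕ) : ℕ := if h : x < n then (π ⟨x, h⟩ : ℕ) else 0

theorem raw_fin {n : ℕ} (π : Equiv.Perm (Fin n)) (x : Fin n) : raw π x = π x := by
  simp [raw]

theorem raw_ok {n : ℕ} (π : Equiv.Perm (Fin n)) : Ok n (raw π) := by
  constructor
  · intro x hx; simp [raw, hx]
  · intro x y hx hy h
    simp only [raw, hx, hy, dif_pos] at h
    have := π.injective (Fin.ext h)
    simpa using this

def pins {n : ℕ} (i : Fin (n+1)) (π : Equiv.Perm (Fin n)) : Equiv.Perm (Fin (n+1)) :=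
  (finSuccEquiv' i).trans ((Equiv.optionCongr π).trans (finSuccEquiv' (Fin.last n)).symm)

theorem pins_self {n : ℕ} (i : Fin (n+1)) (π : Equiv.Perm (Fin n)) : pins i π i = Fin.last n := by
  simp [pins]

theorem pins_succAbove {n : ℕ} (i : Fin (n+1)) (π : Equiv.Perm (Fin n)) (x : Fin n) :
    pins i π (i.succAbove x) = (π x).castSucc := by
  simp [pins]

theorem raw_pins {n : ℕ} (i : Fin (n+1)) (π : Equiv.Perm (Fin n)) :
    raw (pins i π) = Ins i n (raw π) := by
  funext x
  by_cases hx : x < n + 1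
  · rcases pos_cases (i : ℕ) x with h | rfl | ⟨y, h, rfl⟩
    · rw [Ins_lt h]
      have hxn : x < n := by omega
      have := pins_succAbove i π ⟨x, hxn⟩
      rw [Fin.succAbove_of_castSucc_lt _ _ (by simpa [Fin.lt_def] using h)] at this
      have e := congrArg Fin.val this
      simp only [raw, hx, hxn, dif_pos]
      simpa using e
    · rw [Ins_self, raw_fin, pins_self]; rfl
    · rw [Ins_succ h]
      have hxn : y < n := by omega
      have := pins_succAbove i π ⟨y, hxn⟩
      rw [Fin.succAbove_of_le_castSucc _ _ (by simpa [Fin.le_def] using h)] at this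
      have e := congrArg Fin.val this
      simp only [raw, hx, hxn, dif_pos]
      simpa using e
  · have : (i : ℕ) < n + 1 := i.2
    obtain ⟨y, rfl⟩ : ∃ y, x = y + 1 := ⟨x - 1, by omega⟩
    rw [Ins_succ (by omega)]
    simp only [raw, hx, dif_neg, not_false_eq_true]
    rw [dif_neg (by omega)]

theorem pins_bij (n : ℕ) : Function.Bijective
    (fun q : Equiv.Perm (Fin n) × Fin (n+1) => pins q.2 q.1) := by
  rw [Fintype.bijective_iff_injective_and_card]
  constructor
  · rintro ⟨π, i⟩ ⟨ρ, j⟩ h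
    simp only at h
    have hij : i = j := by
      apply (pins j ρ).injective
      rw [pins_self, ← h, pins_self]
    subst hij
    have : π = ρ := by
      ext x
      have h1 := pins_succAbove i π x
      rw [h, pins_succAbove] at h1
      have := congrArg Fin.val h1
      simpa using this.symm
    rw [this]
  · simp [Fintype.card_perm, Nat.factorial_succ, mul_comm]

open Classical in
theorem sum_step (n d : ℕ) :
    ∑ ρ ∈ Finset.univ.filter (fun ρ : Equiv.Perm (Fin (n+1)) => Av (n+1) (raw ρ)),
      D d (n+1) (raw ρ) =
    ∑ π ∈ Finset.univ.filter (fun π : Equiv.Perm (Fin n) => Av n (raw π)),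
      D (d+1) n (raw π) := by
  rw [Finset.sum_filter, ← (pins_bij n).sum_comp, Fintype.sum_prod_type, Finset.sum_filter]
  refine Finset.sum_congr rfl fun π _ => ?_
  have e : ∀ i : Fin (n+1), (if Av (n+1) (raw (pins i π)) then D d (n+1) (raw (pins i π)) else 0) =
      if Av n (raw π) then
        (if Act n (raw π) (i : ℕ) then D d (n+1) (Ins i n (raw π)) else 0) else 0 := by
    intro i
    rw [raw_pins, ← ite_and]
    simp only [av_ins (raw_ok π) (Nat.lt_succ_iff.1 i.2)]
  simp only [e]
  split_ifs with h
  · rw [D, acts, Finset.sum_filter,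
      Fin.sum_univ_eq_sum_range (fun i => if Act n (raw π) i then D d (n+1) (Ins i n (raw π)) else 0)]
  · simp

open Classical in
theorem sum_all (d : ℕ) : ∀ n,
    ∑ π ∈ Finset.univ.filter (fun π : Equiv.Perm (Fin n) => Av n (raw π)), D d n (raw π) =
    (Finset.univ.filter (fun π : Equiv.Perm (Fin (d+n)) => Av (d+n) (raw π))).card := by
  induction d with
  | zero => intro n; rw [Nat.zero_add]; simp [D]
  | succ d ih =>
    intro n
    rw [← sum_step, ih (n+1), show d + 1 + n = d + (n+1) by omega]

theorem good_one : Good 1 (fun _ => 0) 0 := by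
  have hA : ∀ i, Act 1 (fun _ => 0) i := by
    intro i; refine ⟨?_, ?_, ?_⟩ <;> · intro x y z; simp
  refine ⟨⟨by simp, by intros; omega⟩, by omega, rfl, hA _, hA _, hA _, ?_, ?_⟩
  · intro j h1 _ x y h; omega
  · intro j h1 h2 _ y h3 h4
    exact ⟨fun x _ => by omega, fun z _ _ => by omega⟩

open Classical in
theorem count_succ (d : ℕ) :
    (Finset.univ.filter (fun π : Equiv.Perm (Fin (d+1)) => Av (d+1) (raw π))).card = F d 1 0 1 := by
  rw [← sum_all]
  have hr : ∀ π : Equiv.Perm (Fin 1), raw π = fun _ => 0 := by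
    intro π; funext x; simp [raw]
  have hA : ∀ i, Act 1 (fun _ => 0) i := by
    intro i; refine ⟨?_, ?_, ?_⟩ <;> · intro x y z; simp
  have hAv : Av 1 (fun _ => 0) := by intro a b c d; intros; omega
  have hacts : acts 1 (fun _ => 0) = {0, 1} := by
    ext i; rw [mem_acts]; simp only [hA, and_true, Finset.mem_insert, Finset.mem_singleton]; omega
  have hPS : PS 1 (fun _ => 0) 1 := by intro x y; intros; omega
  simp only [hr, hAv]
  rw [D_eq d _ _ _ good_one]
  have e1 : kk 1 (fun _ => 0) 0 = 1 := by
    unfold kk; rw [hacts]; rfl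
  have e2 : rr 1 (fun _ => 0) 0 = 0 := by
    unfold rr; rw [hacts, Finset.card_eq_zero, Finset.filter_eq_empty_iff]
    intro x hx
    simp only [Finset.mem_insert, Finset.mem_singleton] at hx
    rcases hx with rfl | rfl <;> simp [hPS]
  have e3 : pp 1 (fun _ => 0) 0 = 1 := by
    unfold pp; rw [hacts, Finset.card_eq_one]
    refine ⟨1, ?_⟩
    ext x
    simp only [Finset.mem_filter, Finset.mem_insert, Finset.mem_singleton]
    constructor
    · rintro ⟨h1, h2, h3⟩; omega
    · rintro rfl; exact ⟨by simp, by simp, hPS⟩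
  rw [e1, e2, e3]
  simp

theorem contains_of {n : ℕ} (π : Equiv.Perm (Fin n)) (σ : Fin 4 → Fin 4) (v : Fin 4 → Fin n)
    (hv : StrictMono v) (h : ∀ a b, σ a < σ b ↔ π (v a) < π (v b)) : ContainsPattern π σ :=
  ⟨OrderEmbedding.ofStrictMono v hv, h⟩

theorem avoid_iff {n : ℕ} (π : Equiv.Perm (Fin n)) :
    (∀ σ ∈ ({![2,0,3,1], ![1,2,0,3], ![0,3,1,2]} : Set (Fin 4 → Fin 4)), ¬ ContainsPattern π σ) ↔
      Av n (raw π) := by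
  constructor
  · intro H a b c d h1 h2 h3 h4
    have ra := raw_fin π ⟨a, by omega⟩
    have rb := raw_fin π ⟨b, by omega⟩
    have rc := raw_fin π ⟨c, by omega⟩
    have rd := raw_fin π ⟨d, by omega⟩
    simp only at ra rb rc rd
    rw [ra, rb, rc, rd]
    have hv : StrictMono (![⟨a, by omega⟩, ⟨b, by omega⟩, ⟨c, by omega⟩, ⟨d, by omega⟩] : Fin 4 → Fin n) := by
      rw [Fin.strictMono_iff_lt_succ]
      intro i; fin_cases i <;> simp [Fin.lt_def] <;> assumption
    refine ⟨?_, ?_, ?_⟩ <;> rintro ⟨k1, k2, k3⟩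
    · refine H ![2,0,3,1] (by simp) (contains_of π _ _ hv ?_)
      intro x y
      fin_cases x <;> fin_cases y <;> simp [-Fin.val_fin_lt, Fin.lt_def] <;> omega
    · refine H ![1,2,0,3] (by simp) (contains_of π _ _ hv ?_)
      intro x y
      fin_cases x <;> fin_cases y <;> simp [-Fin.val_fin_lt, Fin.lt_def] <;> omega
    · refine H ![0,3,1,2] (by simp) (contains_of π _ _ hv ?_)
      intro x y
      fin_cases x <;> fin_cases y <;> simp [-Fin.val_fin_lt, Fin.lt_def] <;> omega
  · rintro H σ hσ ⟨f, hf⟩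
    have m1 : f 0 < f 1 := f.strictMono (by decide)
    have m2 : f 1 < f 2 := f.strictMono (by decide)
    have m3 : f 2 < f 3 := f.strictMono (by decide)
    have K := H (f 0) (f 1) (f 2) (f 3) m1 m2 m3 (f 3).2
    simp only [raw_fin, Fin.val_fin_lt] at K
    simp only [Set.mem_insert_iff, Set.mem_singleton_iff] at hσ
    rcases hσ with rfl | rfl | rfl
    · exact K.1 ⟨(hf 1 3).1 (by decide), (hf 3 0).1 (by decide), (hf 0 2).1 (by decide)⟩
    · exact K.2.1 ⟨(hf 2 0).1 (by decide), (hf 0 1).1 (by decide), (hf 1 3).1 (by decide)⟩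
    · exact K.2.2 ⟨(hf 0 2).1 (by decide), (hf 2 3).1 (by decide), (hf 3 1).1 (by decide)⟩

open Classical in
theorem avoiderCount_eq (n : ℕ) :
    avoiderCount ({![2,0,3,1], ![1,2,0,3], ![0,3,1,2]} : Set (Fin 4 → Fin 4)) n =
      (Finset.univ.filter (fun π : Equiv.Perm (Fin n) => Av n (raw π))).card := by
  unfold avoiderCount
  simp only [avoid_iff]
  rw [Nat.card_eq_fintype_card, Fintype.card_subtype]

theorem gf_eq : avoiderGF ({![2,0,3,1], ![1,2,0,3], ![0,3,1,2]} : Set (Fin 4 → Fin 4)) =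
    1 + X * PF 1 0 1 := by
  apply ext_shift
  · simp only [avoiderGF, coeff_mk, avoiderCount_eq]
    classical
    rw [Finset.filter_true_of_mem]
    · simp
    · intro π _ a b c d; intros; omega
  · intro d
    simp only [avoiderGF, coeff_mk, avoiderCount_eq, count_succ, PF]

end PA

theorem statement_13 :
    ((1 : PowerSeries ℚ) - X) * (1 - 8*X + 22*X^2 - 24*X^3 + 8*X^4 - X^5) * avoiderGF ({![2,0,3,1], ![1,2,0,3], ![0,3,1,2]} : Set (Fin 4 → Fin 4)) =
      (1 - 2*X) * (1 - 3*X + X^2)^2 := by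
  rw [PA.gf_eq]
  exact PA.final_alg
end
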